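/- arXiv:1512.04866 — 2 statements merged into one kernel-verified Lean document; each statement's English description precedes it below -/
import Mathlib

section
/- Let Γ be a planar octilinear drawing of a simple graph G, let C be a cycle of length k ≥ 3 in G, and let σ be the number of edges of G having one endpoint on C and whose other endpoint is drawn in the interior of C in Γ. Then the edges of C carry in total at least max{0, ⌈(σ − 3k + 8)/3⌉} bends in Γ. -/
/-!
Identify the plane with `ℂ`. If the cycle `C` has length `k` and its edges carry `b` bends, then
`C` is drawn as a simple closed polygon with `m = k + b` corners, all of whose edges have
octilinear directions, so that each inner angle is `a π / 4` with `a` an integer, `1 ≤ a ≤ 7`. The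
inner angles of a simple polygon add up to `(m - 2) π`, hence the numbers `a` add up to `4 m - 8`.
An edge joining a vertex of `C` to a vertex in the interior of `C` leaves `C` in an octilinear
direction strictly inside the inner angle, and distinct edges leave in distinct directions; so a
corner with inner angle `a π / 4` has at most `a - 1` such edges. Summation over all corners
(bends contribute `a - 1 ≥ 0`) gives `σ ≤ (4 m - 8) - m = 3 m - 8 = 3 k + 3 b - 8`, which is
`b ≥ (σ - 3 k + 8) / 3`.

Two facts about simple polygons are needed. The angle sum is the polygonal Umlaufsatz
(`SimplePolygon.turning_sum`), proved by the argument of Hopf in discrete form: the change of the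
direction of the secant `p j - p i` around an elementary square of pairs `(i, j)` vanishes because
two disjoint segments can be separated by a line (`square_closes`), so the turning along the
diagonal of the index triangle equals the turning along its legs, where the secants issue from the
lexicographically smallest corner and stay in a half-plane. That the other side of the polygon is
outer (`SimplePolygon.sector_outer`) is a statement about small sectors at the corners: the sector
at the smallest corner contains the beginning of a ray to infinity, and the sectors at consecutive
corners are joined by thin strips along the edges. No Jordan curve theorem is required: being inner is
only ever used in the form of not lying in an unbounded component (`SimplePolygon.orientation`).

The bound on `σ` for polygons is `SimplePolygon.count_bound`. The polygon is assembled from the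
polylines of the cycle in `exists_polygon`; `ChainDrawing.stays_inside` shows that an edge to an
interior vertex starts in the interior, and `ChainDrawing.interior_edges_le` combines these.
-/

/-!
Common definitions: polylines, octilinear drawings, planarity, triconnectivity.
-/

/-- A polyline: a sequence of `len + 1` points `pt 0, pt 1, …, pt len`,
consisting of `len ≥ 1` segments. (Values of `pt` beyond `len` are irrelevant.) -/
structure Polyline where
  len : ℕ
  len_pos : 1 ≤ len
  pt : ℕ → ℝ × ℝ

namespace Polyline

/-- The number of bends of a polyline (its interior points `pt 1, …, pt (len-1)`). -/
def bends (P : Polyline) : ℕ := P.len - 1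

/-- Piecewise-linear parametrization of the polyline on the interval `[0, len]`. -/
noncomputable def param (P : Polyline) (s : ℝ) : ℝ × ℝ :=
  P.pt ⌊s⌋.toNat + (s - (⌊s⌋.toNat : ℝ)) • (P.pt (⌊s⌋.toNat + 1) - P.pt ⌊s⌋.toNat)

/-- The image (trace) of the polyline in the plane. -/
noncomputable def image (P : Polyline) : Set (ℝ × ℝ) :=
  P.param '' Set.Icc 0 (P.len : ℝ)

/-- The polyline is a simple curve. -/
def Simple (P : Polyline) : Prop :=
  Set.InjOn P.param (Set.Icc 0 (P.len : ℝ))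

/-- Every segment is nondegenerate, and no two consecutive segments are collinear. -/
def Proper (P : Polyline) : Prop :=
  (∀ i < P.len, P.pt i ≠ P.pt (i + 1)) ∧
  (∀ i, i + 1 < P.len → ¬ Collinear ℝ ({P.pt i, P.pt (i + 1), P.pt (i + 2)} : Set (ℝ × ℝ)))

/-- The segment from `a` to `b` is horizontal, vertical, or diagonal at `45°`. -/
def OctiSeg (a b : ℝ × ℝ) : Prop :=
  b.2 - a.2 = 0 ∨ b.1 - a.1 = 0 ∨ b.2 - a.2 = b.1 - a.1 ∨ b.2 - a.2 = -(b.1 - a.1)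

/-- The polyline is octilinear: proper, with all segments in octilinear directions. -/
def Octilinear (P : Polyline) : Prop :=
  P.Proper ∧ ∀ i < P.len, OctiSeg (P.pt i) (P.pt (i + 1))

end Polyline

/-- Embedding of the integer grid into the real plane. -/
def toR (p : ℤ × ℤ) : ℝ × ℝ := ((p.1 : ℝ), (p.2 : ℝ))

/-- A polyline drawing of a simple graph `G` in the plane:
an injective placement of the vertices and, for each edge, a polyline whose
endpoints are the points of the edge's endvertices, with nondegenerate segments
and no two consecutive segments collinear. -/
structure PolyDrawing {V : Type*} (G : SimpleGraph V) where
  pos : V → ℝ × ℝ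
  inj : Function.Injective pos
  poly : Sym2 V → Polyline
  ends : ∀ u v, G.Adj u v →
    ({(poly s(u, v)).pt 0, (poly s(u, v)).pt (poly s(u, v)).len} : Set (ℝ × ℝ)) =
      {pos u, pos v}
  proper : ∀ e ∈ G.edgeSet, (poly e).Proper

/-- A polyline drawing is planar: every edge-polyline is a simple curve meeting the
vertex points exactly in its two endpoints, and polylines of distinct edges intersect
only in images of common endvertices. -/
def PolyDrawing.IsPlanar {V : Type*} {G : SimpleGraph V} (D : PolyDrawing G) : Prop :=
  (∀ e ∈ G.edgeSet, (D.poly e).Simple) ∧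
  (∀ u v, G.Adj u v →
    (D.poly s(u, v)).image ∩ Set.range D.pos = {D.pos u, D.pos v}) ∧
  (∀ e ∈ G.edgeSet, ∀ e' ∈ G.edgeSet, e ≠ e' →
    (D.poly e).image ∩ (D.poly e').image ⊆ D.pos '' {w | w ∈ e ∧ w ∈ e'})

/-- A simple graph is planar if it admits a planar polyline drawing in `ℝ²`. -/
def GraphPlanar {V : Type*} (G : SimpleGraph V) : Prop :=
  ∃ D : PolyDrawing G, D.IsPlanar

/-- An octilinear drawing of a simple graph `G`: vertices are placed injectively on the
integer grid and each edge is drawn as an octilinear polyline between its endvertices. -/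
structure OctiDrawing {V : Type*} (G : SimpleGraph V) where
  pos : V → ℤ × ℤ
  inj : Function.Injective pos
  poly : Sym2 V → Polyline
  ends : ∀ u v, G.Adj u v →
    ({(poly s(u, v)).pt 0, (poly s(u, v)).pt (poly s(u, v)).len} : Set (ℝ × ℝ)) =
      {toR (pos u), toR (pos v)}
  octi : ∀ e ∈ G.edgeSet, (poly e).Octilinear

/-- An octilinear drawing is planar: every edge-polyline is a simple curve meeting the
vertex points exactly in its two endpoints, and polylines of distinct edges intersect
only in images of common endvertices. -/
def OctiDrawing.IsPlanar {V : Type*} {G : SimpleGraph V} (D : OctiDrawing G) : Prop :=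
  (∀ e ∈ G.edgeSet, (D.poly e).Simple) ∧
  (∀ u v, G.Adj u v →
    (D.poly s(u, v)).image ∩ Set.range (fun w => toR (D.pos w)) =
      {toR (D.pos u), toR (D.pos v)}) ∧
  (∀ e ∈ G.edgeSet, ∀ e' ∈ G.edgeSet, e ≠ e' →
    (D.poly e).image ∩ (D.poly e').image ⊆
      (fun w => toR (D.pos w)) '' {w | w ∈ e ∧ w ∈ e'})

/-- The total number of bends of an octilinear drawing. -/
noncomputable def OctiDrawing.totalBends {V : Type*} [Fintype V] {G : SimpleGraph V}
    (D : OctiDrawing G) : ℕ :=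
  ∑ e ∈ G.edgeSet.toFinite.toFinset, (D.poly e).bends

/-- The union of the images of the polylines of a set `S` of edges. -/
noncomputable def edgesImage {V : Type*} {G : SimpleGraph V} (D : OctiDrawing G)
    (S : Set (Sym2 V)) : Set (ℝ × ℝ) :=
  ⋃ e ∈ S, (D.poly e).image

/-- The interior (in the drawing `D`) of the closed curve formed by the edges in `S`:
the union of the bounded connected components of the complement of the curve. -/
noncomputable def interiorOf {V : Type*} {G : SimpleGraph V} (D : OctiDrawing G)
    (S : Set (Sym2 V)) : Set (ℝ × ℝ) :=
  {z | z ∉ edgesImage D S ∧ Bornology.IsBounded (connectedComponentIn (edgesImage D S)ᶜ z)}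

/-- A graph is triconnected if it has at least `4` vertices and deleting
any at most `2` vertices leaves it connected. -/
def Triconnected {V : Type*} [Fintype V] (G : SimpleGraph V) : Prop :=
  4 ≤ Fintype.card V ∧ ∀ S : Set V, S.ncard ≤ 2 → (G.induce Sᶜ).Connected

/-- The maximum degree of `G` is at most `k`. -/
def MaxDegLE {V : Type*} (G : SimpleGraph V) (k : ℕ) : Prop :=
  ∀ v, (G.neighborSet v).ncard ≤ k

namespace OctiPoly
open Complex

/-! ### Directions of secants -/

theorem arg_div_eq_sub {z w : ℂ} (hz : z ≠ 0) (hw : w ≠ 0) (h1 : -Real.pi < arg w - arg z)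
    (h2 : arg w - arg z ≤ Real.pi) : arg (w / z) = arg w - arg z := by
  have h := Complex.arg_div_coe_angle hw hz
  rw [← Real.Angle.coe_sub] at h
  have h' := congrArg Real.Angle.toReal h
  rwa [Complex.arg_coe_angle_toReal_eq_arg,
    Real.Angle.toReal_coe_eq_self_iff.2 ⟨h1, h2⟩] at h'

theorem arg_div_of_halfPlane {u z w : ℂ} (hz : 0 < (u * z).re) (hw : 0 < (u * w).re) :
    arg (w / z) = arg (u * w) - arg (u * z) := by
  have hz0 : u * z ≠ 0 := by intro h; simp [h] at hz
  have hw0 : u * w ≠ 0 := by intro h; simp [h] at hw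
  have hu : u ≠ 0 := left_ne_zero_of_mul hz0
  have a1 := abs_lt.1 (Complex.abs_arg_lt_pi_div_two_iff.2 (Or.inl hz))
  have a2 := abs_lt.1 (Complex.abs_arg_lt_pi_div_two_iff.2 (Or.inl hw))
  rw [← arg_div_eq_sub hz0 hw0 (by linarith [a1.1, a1.2, a2.1]) (by linarith [a1.1, a1.2, a2.2]),
    mul_div_mul_left _ _ hu]

/-- Two disjoint segments are strictly separated by a line; `u` is normal to it. -/
theorem exists_separating {a b c d : ℂ} (h : Disjoint (segment ℝ a b) (segment ℝ c d)) :
    ∃ u : ℂ, ∀ x ∈ segment ℝ a b, ∀ y ∈ segment ℝ c d, 0 < (u * (y - x)).re := by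
  have hc : ∀ x y : ℂ, IsCompact (segment ℝ x y) := fun x y => by
    rw [← convexHull_pair]; exact (Set.toFinite {x, y}).isCompact_convexHull (𝕜 := ℝ)
  obtain ⟨f, s, t, h1, hst, h2⟩ := geometric_hahn_banach_compact_closed (convex_segment a b)
    (hc a b) (convex_segment c d) (hc c d).isClosed h
  refine ⟨⟨f 1, -f I⟩, fun x hx y hy => ?_⟩
  have key : ∀ z : ℂ, ((⟨f 1, -f I⟩ : ℂ) * z).re = f z := by
    intro z
    have : z = z.re • (1 : ℂ) + z.im • I := by
      apply Complex.ext <;> simp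
    conv_rhs => rw [this, map_add, map_smul, map_smul]
    simp only [Complex.mul_re, smul_eq_mul]
    ring
  rw [key, map_sub]
  linarith [h1 x hx, h2 y hy]

/-- The direction of `y - x`, for `x` on one and `y` on the other of two disjoint segments, does not
wind: the changes of direction from `(a, c)` to `(b, d)` via `(a, d)` and via `(b, c)` agree. -/
theorem square_closes {a b c d : ℂ} (h : Disjoint (segment ℝ a b) (segment ℝ c d)) :
    arg ((d - a) / (c - a)) + arg ((d - b) / (d - a)) =
      arg ((c - b) / (c - a)) + arg ((d - b) / (c - b)) := by
  obtain ⟨u, hu⟩ := exists_separating h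
  have ha := left_mem_segment ℝ a b
  have hb := right_mem_segment ℝ a b
  have hc := left_mem_segment ℝ c d
  have hd := right_mem_segment ℝ c d
  rw [arg_div_of_halfPlane (hu a ha c hc) (hu a ha d hd),
    arg_div_of_halfPlane (hu a ha d hd) (hu b hb d hd),
    arg_div_of_halfPlane (hu a ha c hc) (hu b hb c hc),
    arg_div_of_halfPlane (hu b hb c hc) (hu b hb d hd)]
  ring

/-- The turning angle between consecutive edge vectors `x` and `y` enclosing the angle `α`. -/
theorem turn_arg {x y : ℂ} {r α : ℝ} (hr : 0 < r) (h0 : 0 < α) (h1 : α < 2 * Real.pi)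
    (hy : y ≠ 0) (h : -x = r * exp (α * I) * y) : arg (y / x) = Real.pi - α := by
  have hx : x = (r : ℂ) * exp (((α - Real.pi : ℝ) : ℂ) * I) * y := by
    rw [← neg_neg x, h]
    push_cast
    rw [sub_mul, Complex.exp_sub, Complex.exp_pi_mul_I]
    ring
  have : y / x = ((r⁻¹ : ℝ) : ℂ) * exp (((Real.pi - α : ℝ) : ℂ) * I) := by
    rw [hx, show ((Real.pi - α : ℝ) : ℂ) * I = -(((α - Real.pi : ℝ) : ℂ) * I) by push_cast; ring,
      Complex.exp_neg]
    have := Complex.exp_ne_zero (((α - Real.pi : ℝ) : ℂ) * I)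
    have hr' : (r : ℂ) ≠ 0 := by exact_mod_cast hr.ne'
    push_cast
    field_simp
  rw [this, Complex.arg_real_mul _ (inv_pos.2 hr), Complex.arg_exp_mul_I,
    toIocMod_eq_self]
  constructor <;> linarith

/-- Passing from the edge vector `x` to the next one `y` through the secant `x + y` gives the same
turning angle, as all three lie in a half-plane. -/
theorem triangle_closes {x y : ℂ} {r α : ℝ} (hr : 0 < r) (h0 : 0 < α) (h1 : α < 2 * Real.pi)
    (hy : y ≠ 0) (h : -x = r * exp (α * I) * y) :
    arg ((x + y) / x) + arg (y / (x + y)) = Real.pi - α := by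
  rw [← turn_arg hr h0 h1 hy h]
  -- the bisecting direction
  set u : ℂ := exp (((Real.pi - α) / 2 : ℝ) * I) / y with hu
  have uy : 0 < (u * y).re := by
    rw [hu, div_mul_cancel₀ _ hy, Complex.exp_ofReal_mul_I_re]
    apply Real.cos_pos_of_mem_Ioo; constructor <;> linarith
  have ux : 0 < (u * x).re := by
    have : u * x = (r : ℂ) * exp (((α - Real.pi) / 2 : ℝ) * I) := by
      rw [← neg_neg x, h, hu]
      have e1 : exp (((α - Real.pi) / 2 : ℝ) * I) =
          -(exp (((Real.pi - α) / 2 : ℝ) * I) * exp (α * I)) := by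
        rw [← Complex.exp_add, ← mul_neg_one, ← Complex.exp_neg_pi_mul_I, ← Complex.exp_add]
        congr 1; push_cast; ring
      rw [e1]; field_simp
    rw [this, Complex.re_ofReal_mul, Complex.exp_ofReal_mul_I_re]
    apply mul_pos hr
    apply Real.cos_pos_of_mem_Ioo; constructor <;> linarith
  have uxy : 0 < (u * (x + y)).re := by rw [mul_add, Complex.add_re]; positivity
  rw [arg_div_of_halfPlane ux uxy, arg_div_of_halfPlane uxy uy, arg_div_of_halfPlane ux uy]
  ring

/-! ### Summation over the index triangle

Below, `h i j` and `g i j` are the changes of direction of the secant from `i` to `j` when `j`,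
respectively `i`, is increased by one, and `τ` is the turning angle at a corner. -/

section Sums
variable {m : ℕ} {h g : ℤ → ℤ → ℝ} {τ : ℤ → ℝ}

theorem column_sum (sq : ∀ i j : ℤ, i + 1 < j → j + 1 - i < m →
      h i j + g i (j + 1) = g i j + h (i + 1) j) (b : ℤ) (n : ℕ) (hn : n + 3 ≤ m) (c : ℕ)
    (hc : c ≤ n) :
    h b (b + n + 1) + ∑ l ∈ Finset.range c, g (b + l) (b + n + 1 + 1) =
      ∑ l ∈ Finset.range c, g (b + l) (b + n + 1) + h (b + c) (b + n + 1) := by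
  induction c with
  | zero => simp
  | succ c ih =>
    have := sq (b + c) (b + n + 1) (by omega) (by omega)
    rw [Finset.sum_range_succ, Finset.sum_range_succ, ← add_assoc, ih (by omega)]
    push_cast
    rw [← add_assoc b (c : ℤ) 1]
    linarith

/-- The total turning along the diagonal of the index triangle equals the change of direction along
its two legs. -/
theorem staircase_sum (sq : ∀ i j : ℤ, i + 1 < j → j + 1 - i < m →
      h i j + g i (j + 1) = g i j + h (i + 1) j)
    (dia : ∀ i, h i (i + 1) + g i (i + 1 + 1) = τ (i + 1)) (b : ℤ) (n : ℕ) (hn : n + 2 ≤ m) :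
    ∑ l ∈ Finset.range n, τ (b + l + 1) =
      ∑ l ∈ Finset.range n, h b (b + l + 1) + ∑ l ∈ Finset.range n, g (b + l) (b + n + 1) := by
  induction n with
  | zero => simp
  | succ n ih =>
    have hc := column_sum sq b n (by omega) n le_rfl
    have hd := dia (b + n)
    rw [Finset.sum_range_succ, ih (by omega), Finset.sum_range_succ (fun l : ℕ => h b (b + l + 1)),
      Finset.sum_range_succ (fun l : ℕ => g (b + l) (b + (n + 1 : ℕ) + 1))]
    push_cast
    rw [← add_assoc b (n : ℤ) 1]
    linarith

theorem row_sum (sq : ∀ i j : ℤ, i + 1 < j → j + 1 - i < m →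
      h i j + g i (j + 1) = g i j + h (i + 1) j) (b : ℤ) (c : ℕ) (hc : c + 3 ≤ m) :
    ∑ l ∈ Finset.range c, h (b + 1) (b + 1 + l + 1) + g b (b + 1 + 1) =
      ∑ l ∈ Finset.range c, h b (b + 1 + l + 1) + g b (b + 1 + c + 1) := by
  induction c with
  | zero => simp
  | succ c ih =>
    have := sq b (b + 1 + c + 1) (by omega) (by omega)
    have := ih (by omega)
    rw [Finset.sum_range_succ, Finset.sum_range_succ]
    push_cast
    rw [← add_assoc (b + 1) (c : ℤ) 1]
    linarith

end Sums

/-! ### The angle sum of a simple polygon -/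

/-- A simple closed polygon with `m ≥ 3` corners, given by an `m`-periodic sequence of points:
the half-open edges `[p i, p (i + 1))` of one period are pairwise disjoint and nondegenerate.
The number `α j ∈ (0, 2π)` is the angle at `p j`, measured counterclockwise from the outgoing to
the incoming edge (so on the left of the traversed curve). -/
structure SimplePolygon (m : ℕ) (p : ℤ → ℂ) (α : ℤ → ℝ) : Prop where
  three : 3 ≤ m
  per : ∀ i, p (i + m) = p i
  inj : ∀ (i j : ℤ) (s t : ℝ), 0 ≤ s → s < 1 → 0 ≤ t → t < 1 →
    p i + s * (p (i + 1) - p i) = p j + t * (p (j + 1) - p j) → s = t ∧ (m : ℤ) ∣ i - j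
  perα : ∀ i, α (i + m) = α i
  pos : ∀ i, 0 < α i
  lt : ∀ i, α i < 2 * Real.pi
  ang : ∀ i, ∃ r : ℝ, 0 < r ∧ p (i - 1) - p i = r * exp (α i * I) * (p (i + 1) - p i)

namespace SimplePolygon
variable {m : ℕ} {p : ℤ → ℂ} {α : ℤ → ℝ}

theorem ne (H : SimplePolygon m p α) (i : ℤ) : p (i + 1) - p i ≠ 0 := by
  intro h
  have := (H.inj i i 0 (1 / 2) (by norm_num) (by norm_num) (by norm_num) (by norm_num)
    (by simp [h])).1
  norm_num at this

theorem dvd_of_eq (H : SimplePolygon m p α) {i j : ℤ} (h : p i = p j) : (m : ℤ) ∣ i - j :=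
  (H.inj i j 0 0 (by norm_num) (by norm_num) (by norm_num) (by norm_num) (by simp [h])).2

theorem per_mul (H : SimplePolygon m p α) (i k : ℤ) : p (i + k * m) = p i := by
  have : Function.Periodic p (m : ℤ) := H.per
  simpa using this.int_mul k i

theorem eq_of_dvd (H : SimplePolygon m p α) {i j : ℤ} (h : (m : ℤ) ∣ i - j) : p i = p j := by
  obtain ⟨k, hk⟩ := h
  rw [show i = j + k * m by linarith, H.per_mul]

theorem mem_seg {a b z : ℂ} (h : z ∈ segment ℝ a b) :
    ∃ s : ℝ, 0 ≤ s ∧ s ≤ 1 ∧ z = a + s * (b - a) := by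
  rw [segment_eq_image'] at h
  obtain ⟨s, hs, rfl⟩ := h
  exact ⟨s, hs.1, hs.2, by simp⟩

theorem seg_mem {a b : ℂ} {s : ℝ} (h0 : 0 ≤ s) (h1 : s ≤ 1) :
    a + s * (b - a) ∈ segment ℝ a b := by
  rw [segment_eq_image']
  exact ⟨s, ⟨h0, h1⟩, by simp⟩

theorem mem_edge {i : ℤ} {z : ℂ} (h : z ∈ segment ℝ (p i) (p (i + 1))) :
    ∃ (i' : ℤ) (s : ℝ), (i' = i ∨ (i' = i + 1 ∧ s = 0)) ∧ 0 ≤ s ∧ s < 1 ∧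
      z = p i' + s * (p (i' + 1) - p i') := by
  obtain ⟨s, h0, h1, rfl⟩ := mem_seg h
  rcases h1.lt_or_eq with h1 | rfl
  · exact ⟨i, s, Or.inl rfl, h0, h1, rfl⟩
  · exact ⟨i + 1, 0, Or.inr ⟨rfl, rfl⟩, le_rfl, by norm_num, by simp⟩

theorem edges_disjoint (H : SimplePolygon m p α) {i j : ℤ} (h1 : i + 1 < j) (h2 : j + 1 - i < m) :
    Disjoint (segment ℝ (p i) (p (i + 1))) (segment ℝ (p j) (p (j + 1))) := by
  rw [Set.disjoint_left]
  intro z hz hz'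
  obtain ⟨i', s, hi, hs0, hs1, rfl⟩ := mem_edge hz
  obtain ⟨j', t, hj, ht0, ht1, e⟩ := mem_edge hz'
  obtain ⟨k, hk⟩ := (H.inj i' j' s t hs0 hs1 ht0 ht1 e).2
  have : 0 < j' - i' ∧ j' - i' < m := by
    rcases hi with rfl | ⟨rfl, -⟩ <;> rcases hj with rfl | ⟨rfl, -⟩ <;> constructor <;> omega
  have k0 : k < 0 := by by_contra hk0; nlinarith
  have k1 : -1 < k := by by_contra hk0; nlinarith
  omega

theorem vertex_mem_edge (H : SimplePolygon m p α) {i j : ℤ}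
    (h : p j ∈ segment ℝ (p i) (p (i + 1))) : (m : ℤ) ∣ i - j ∨ (m : ℤ) ∣ i - (j - 1) := by
  obtain ⟨i', s, hi, hs0, hs1, e⟩ := mem_edge h
  have := (H.inj i' j s 0 hs0 hs1 le_rfl (by norm_num) (by simp [← e])).2
  rcases hi with rfl | ⟨rfl, -⟩
  · exact Or.inl this
  · right; convert this using 1; ring

/-- The point `p 0` is the lexicographic minimum of the polygon, and the curve makes a left turn
there. -/
structure LeftAtMin (p : ℤ → ℂ) : Prop where
  min : ∀ i, (p 0).re < (p i).re ∨ ((p i).re = (p 0).re ∧ (p 0).im ≤ (p i).im)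
  left : arg (p 1 - p 0) < arg (p (-1) - p 0)

theorem arg_bounds {z : ℂ} (h : 0 < z.re ∨ (z.re = 0 ∧ 0 ≤ z.im)) :
    -(Real.pi / 2) < arg z ∧ arg z ≤ Real.pi / 2 := by
  rcases h with h | ⟨h, h'⟩
  · have := abs_lt.1 (Complex.abs_arg_lt_pi_div_two_iff.2 (Or.inl h))
    exact ⟨this.1, this.2.le⟩
  · have := Real.pi_pos
    refine ⟨lt_of_lt_of_le (by linarith) (Complex.arg_nonneg_iff.2 h'),
      Complex.arg_le_pi_div_two_iff.2 (Or.inl h.ge)⟩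

theorem LeftAtMin.bounds (L : LeftAtMin p) (i : ℤ) :
    -(Real.pi / 2) < arg (p i - p 0) ∧ arg (p i - p 0) ≤ Real.pi / 2 := by
  apply arg_bounds
  rcases L.min i with h | ⟨h, h'⟩
  · left; simp; exact h
  · right; simp [h]; exact h'

theorem ne_zero_of_lt (H : SimplePolygon m p α) {i : ℤ} (h0 : 0 < i) (h1 : i < m) :
    p i - p 0 ≠ 0 := by
  intro h
  obtain ⟨k, hk⟩ := H.dvd_of_eq (sub_eq_zero.1 h)
  have k0 : 0 < k := by by_contra hk0; nlinarith
  have k1 : k < 1 := by by_contra hk0; nlinarith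
  omega

theorem arg_exp_angle (θ : ℝ) : (arg (exp (θ * I)) : Real.Angle) = θ := by
  rw [Complex.exp_mul_I]
  simpa using Complex.arg_cos_add_sin_mul_I_coe_angle (θ : Real.Angle)

/-- At the lexicographic minimum the angle is the difference of the arguments of the two edges. -/
theorem alpha_zero (H : SimplePolygon m p α) (L : LeftAtMin p) :
    α 0 = arg (p (-1) - p 0) - arg (p 1 - p 0) := by
  obtain ⟨r, hr, e⟩ := H.ang 0
  have he := H.ne 0
  simp only [zero_sub, zero_add] at e he
  have hpi := Real.pi_pos
  have b1 := L.bounds 1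
  have b2 := L.bounds (-1)
  have hl := L.left
  have hr' : (r : ℂ) ≠ 0 := by exact_mod_cast hr.ne'
  have hn : p (-1) - p 0 ≠ 0 := by
    rw [e]; exact mul_ne_zero (mul_ne_zero hr' (Complex.exp_ne_zero _)) he
  have h1 := Complex.arg_div_coe_angle hn he
  have h2 : (p (-1) - p 0) / (p 1 - p 0) = r * exp (α 0 * I) := by rw [e]; field_simp
  rw [h2, Complex.arg_real_mul _ hr, arg_exp_angle, ← Real.Angle.coe_sub,
    Real.Angle.angle_eq_iff_two_pi_dvd_sub] at h1
  obtain ⟨k, hk⟩ := h1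
  have p1 := H.pos 0
  have p2 := H.lt 0
  have k1 : (k : ℝ) < 1 := by by_contra hh; push Not at hh; nlinarith
  have k2 : (-1 : ℝ) < k := by by_contra hh; push Not at hh; nlinarith
  have : k = 0 := by
    have : k < 1 := by exact_mod_cast k1
    have : -1 < k := by exact_mod_cast k2
    omega
  rw [this] at hk
  simp at hk; linarith

/-- The turning angles add up to one full turn (the polygonal Umlaufsatz). -/
theorem turning_sum (H : SimplePolygon m p α) (L : LeftAtMin p) :
    ∑ l ∈ Finset.range m, (Real.pi - α l) = 2 * Real.pi := by
  set h : ℤ → ℤ → ℝ := fun i j => arg ((p (j + 1) - p i) / (p j - p i)) with hh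
  set g : ℤ → ℤ → ℝ := fun i j => arg ((p j - p (i + 1)) / (p j - p i)) with hg
  have sq : ∀ i j : ℤ, i + 1 < j → j + 1 - i < m →
      h i j + g i (j + 1) = g i j + h (i + 1) j := fun i j h1 h2 =>
    square_closes (H.edges_disjoint h1 h2)
  have dia : ∀ i, h i (i + 1) + g i (i + 1 + 1) = Real.pi - α (i + 1) := by
    intro i
    obtain ⟨r, hr, e⟩ := H.ang (i + 1)
    have := triangle_closes (x := p (i + 1) - p i) hr (H.pos _) (H.lt _) (H.ne (i + 1))
      (by rw [← e]; simp)
    rw [show p (i + 1) - p i + (p (i + 1 + 1) - p (i + 1)) = p (i + 1 + 1) - p i by ring] at this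
    exact this
  have hm := H.three
  have hpi := Real.pi_pos
  obtain ⟨n, rfl⟩ : ∃ n, m = n + 3 := ⟨m - 3, by omega⟩
  have pm : p (-1) = p (n + 2) := by
    rw [← H.per (-1)]; congr 1; push_cast; ring
  -- all directions seen from the extreme corner lie in a half-plane, so they telescope
  have tele : ∀ c : ℕ, c + 2 ≤ n + 3 → ∑ l ∈ Finset.range c, h 0 (0 + l + 1) =
      arg (p (c + 1) - p 0) - arg (p 1 - p 0) := by
    intro c
    induction c with
    | zero => simp
    | succ c ih =>
      intro hc
      rw [Finset.sum_range_succ, ih (by omega)]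
      have b1 := L.bounds (c + 1)
      have b2 := L.bounds (c + 1 + 1)
      have := arg_div_eq_sub (H.ne_zero_of_lt (i := c + 1) (by omega) (by push_cast; omega))
        (H.ne_zero_of_lt (i := c + 1 + 1) (by omega) (by push_cast; omega))
        (by linarith) (by linarith)
      simp only [hh, zero_add]
      rw [this]
      push_cast
      ring
  have T := tele (n + 1) (by omega)
  have A := H.alpha_zero L
  rw [show (((n + 1 : ℕ) : ℤ) + 1) = n + 2 by push_cast; ring, ← pm, ← A] at T
  have S := staircase_sum (τ := fun i => Real.pi - α i) sq dia 1 (n + 1) (by omega)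
  have R := row_sum sq 0 n le_rfl
  have D0 := dia 0
  -- the directions towards `p 0`, seen from the other corners, are the negatives of those above
  have G : ∑ l ∈ Finset.range (n + 1), g (1 + l) (1 + (n + 1 : ℕ) + 1) =
      ∑ l ∈ Finset.range (n + 1), h 0 (0 + l + 1) := by
    apply Finset.sum_congr rfl
    intro l _
    simp only [hh, hg]
    have : p (1 + (n + 1 : ℕ) + 1) = p 0 := by
      rw [← H.per 0]; congr 1; push_cast; ring
    rw [this, ← neg_sub, ← neg_sub (p (1 + l)), neg_div_neg_eq]
    congr 3 <;> congr 1 <;> ring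
  -- the corner of the index triangle
  have K : g 0 (n + 2) + h 1 (n + 2) = Real.pi - α 0 := by
    obtain ⟨r, hr, e⟩ := H.ang 0
    have he := H.ne 0
    simp only [zero_sub, zero_add] at e he
    have e3 : -(p (-1) - p 0) = (r : ℂ) * exp (α 0 * I) * (p 0 - p 1) := by rw [e]; ring
    have := triangle_closes (x := p (-1) - p 0) (y := p 0 - p 1) hr (H.pos 0) (H.lt 0)
      (by rw [← neg_sub]; exact neg_ne_zero.2 he) e3
    rw [show p (-1) - p 0 + (p 0 - p 1) = p (-1) - p 1 by ring] at this
    simp only [hh, hg, zero_add]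
    have q : p ((n : ℤ) + 2 + 1) = p 0 := by
      rw [← H.per 0]; congr 1; push_cast; ring
    rw [q, ← pm]
    exact this
  rw [G, T, Finset.sum_range_succ (fun l : ℕ => h 1 (1 + l + 1))] at S
  rw [Finset.sum_range_succ', Finset.sum_range_succ']
  rw [Finset.sum_range_succ'] at T
  simp only [zero_add, add_zero, Nat.cast_add, Nat.cast_one, CharP.cast_eq_zero]
    at S R T D0 ⊢
  have S1 : ∑ l ∈ Finset.range (n + 1), (Real.pi - α (1 + l + 1)) =
    ∑ l ∈ Finset.range (n + 1), (Real.pi - α (l + 1 + 1)) :=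
    Finset.sum_congr rfl fun l _ => by rw [add_comm (1 : ℤ)]
  have T1 : ∑ l ∈ Finset.range n, h 0 (1 + l + 1) =
    ∑ l ∈ Finset.range n, h 0 (l + 1 + 1) :=
    Finset.sum_congr rfl fun l _ => by rw [add_comm (1 : ℤ)]
  rw [S1] at S
  rw [T1] at R
  rw [show (1 : ℤ) + n + 1 = n + 2 by ring] at S R
  norm_num at S R T D0 ⊢
  linarith

/-! ### The right-hand side of the polygon is outer -/

/-- The curve traced by the polygon. -/
def carrier (p : ℤ → ℂ) : Set ℂ := ⋃ i : ℤ, segment ℝ (p i) (p (i + 1))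

/-- The points off `K` that lie in an unbounded component of the complement of `K`. -/
def outer (K : Set ℂ) : Set ℂ :=
  {z | z ∉ K ∧ ¬ Bornology.IsBounded (connectedComponentIn Kᶜ z)}

theorem outer_of_preconnected {K A : Set ℂ} (hA : IsPreconnected A) (hAK : A ⊆ Kᶜ) {x y : ℂ}
    (hx : x ∈ A) (hy : y ∈ A) (h : x ∈ outer K) : y ∈ outer K := by
  refine ⟨hAK hy, ?_⟩
  rw [← connectedComponentIn_eq (hA.subset_connectedComponentIn hx hAK hy)]
  exact h.2

theorem finite_edges (H : SimplePolygon m p α) :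
    (Set.range fun i : ℤ => segment ℝ (p i) (p (i + 1))).Finite := by
  refine ((Set.finite_Ico (0 : ℤ) m).image fun i : ℤ => segment ℝ (p i) (p (i + 1))).subset ?_
  rintro _ ⟨i, rfl⟩
  have hm : (0 : ℤ) < m := by have := H.three; omega
  refine ⟨i % m, ⟨Int.emod_nonneg _ hm.ne', Int.emod_lt_of_pos _ hm⟩, ?_⟩
  have e : (m : ℤ) ∣ i % m - i := by
    rw [show i % m - i = -(i - i % m) by ring]; exact (dvd_neg.2 (Int.dvd_self_sub_emod))
  have e1 := H.eq_of_dvd e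
  have e2 := H.eq_of_dvd (i := i % m + 1) (j := i + 1) (by convert e using 1; ring)
  simp only [e1, e2]

theorem isClosed_edges (H : SimplePolygon m p α) (Q : ℤ → Prop) :
    IsClosed {z | ∃ i, Q i ∧ z ∈ segment ℝ (p i) (p (i + 1))} := by
  have hf : ({S | ∃ i, Q i ∧ S = segment ℝ (p i) (p (i + 1))} : Set (Set ℂ)).Finite :=
    H.finite_edges.subset (by rintro _ ⟨i, _, rfl⟩; exact ⟨i, rfl⟩)
  have : {z | ∃ i, Q i ∧ z ∈ segment ℝ (p i) (p (i + 1))} =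
      ⋃ S ∈ {S | ∃ i, Q i ∧ S = segment ℝ (p i) (p (i + 1))}, S := by
    ext z; simp only [Set.mem_ofPred_eq, Set.mem_iUnion]
    constructor
    · rintro ⟨i, h, h'⟩; exact ⟨_, ⟨i, h, rfl⟩, h'⟩
    · rintro ⟨_, ⟨i, h, rfl⟩, h'⟩; exact ⟨i, h, h'⟩
  rw [this]
  refine hf.isClosed_biUnion ?_
  rintro _ ⟨i, _, rfl⟩
  rw [← convexHull_pair]; exact (Set.toFinite _).isClosed_convexHull ℝ

/-- Near a corner the curve consists of the two edges meeting there only. -/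
theorem local_star (H : SimplePolygon m p α) (j : ℤ) :
    ∃ ε > 0, ∀ z ∈ carrier p, dist z (p j) < ε →
      z ∈ segment ℝ (p j) (p (j + 1)) ∨ z ∈ segment ℝ (p (j - 1)) (p j) := by
  have hc := H.isClosed_edges fun i => ¬ ((m : ℤ) ∣ i - j ∨ (m : ℤ) ∣ i - (j - 1))
  obtain ⟨ε, hε, hb⟩ := Metric.isOpen_iff.1 hc.isOpen_compl (p j) (by
    rintro ⟨i, hi, hz⟩; exact hi (H.vertex_mem_edge hz))
  refine ⟨ε, hε, fun z hz hd => ?_⟩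
  obtain ⟨i, hi⟩ := Set.mem_iUnion.1 hz
  by_contra hcon
  refine hb (Metric.mem_ball.2 hd) ⟨i, ?_, hi⟩
  rintro (h | h)
  · rw [H.eq_of_dvd h, H.eq_of_dvd (i := i + 1) (j := j + 1) (by convert h using 1; ring)] at hi
    exact hcon (Or.inl hi)
  · rw [H.eq_of_dvd h, H.eq_of_dvd (i := i + 1) (j := j) (by convert h using 1; ring)] at hi
    exact hcon (Or.inr hi)

theorem exp_ne_pos {ρ t φ : ℝ} (hρ : 0 < ρ) (ht : 0 ≤ t) (h0 : 0 < φ) (h1 : φ < 2 * Real.pi)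
    (h : (ρ : ℂ) * exp (φ * I) = t) : False := by
  have hn := congrArg norm h
  rw [norm_mul, Complex.norm_exp_ofReal_mul_I, Complex.norm_of_nonneg hρ.le,
    Complex.norm_of_nonneg ht, mul_one] at hn
  subst hn
  have hρ' : (ρ : ℂ) ≠ 0 := by exact_mod_cast hρ.ne'
  have h2 : exp (φ * I) = 1 := mul_left_cancel₀ hρ' (by rw [h, mul_one])
  obtain ⟨n, hn⟩ := Complex.exp_eq_one_iff.1 h2
  have hn' : φ = n * (2 * Real.pi) := by
    have := congrArg Complex.im hn
    simpa using this
  have hpi := Real.pi_pos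
  have n0 : (0 : ℝ) < n := by by_contra hh; push Not at hh; nlinarith
  have n1 : (n : ℝ) < 1 := by by_contra hh; push Not at hh; nlinarith
  have : 0 < n := by exact_mod_cast n0
  have : n < 1 := by exact_mod_cast n1
  omega

/-- The sector of radius `ε` (in units of the outgoing edge) at the corner `p j`, on the right of
the curve. -/
def sector (p : ℤ → ℂ) (α : ℤ → ℝ) (j : ℤ) (ε : ℝ) : Set ℂ :=
  (fun x : ℝ × ℝ => p j + x.1 * exp (x.2 * I) * (p (j + 1) - p j)) ''
    (Set.Ioo 0 ε ×ˢ Set.Ioo (α j) (2 * Real.pi))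

theorem sector_preconnected (j : ℤ) (ε : ℝ) : IsPreconnected (sector p α j ε) :=
  (isPreconnected_Ioo.prod isPreconnected_Ioo).image _ (by fun_prop)

theorem sector_disjoint (H : SimplePolygon m p α) (j : ℤ) :
    ∃ ε > 0, sector p α j ε ⊆ (carrier p)ᶜ := by
  obtain ⟨ε, hε, hs⟩ := H.local_star j
  have he := H.ne j
  have hen : 0 < ‖p (j + 1) - p j‖ := norm_pos_iff.2 he
  obtain ⟨r, hr, er⟩ := H.ang j
  refine ⟨ε / ‖p (j + 1) - p j‖, by positivity, ?_⟩
  rintro _ ⟨⟨ρ, φ⟩, ⟨⟨hρ0, hρ1⟩, hφ0, hφ1⟩, rfl⟩ hz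
  simp only at hρ0 hρ1 hφ0 hφ1 hz
  have hα := H.pos j
  rcases hs _ hz (by
    rw [dist_self_add_left, norm_mul, norm_mul, Complex.norm_exp_ofReal_mul_I,
      Complex.norm_of_nonneg hρ0.le, mul_one]
    rwa [lt_div_iff₀ hen] at hρ1) with h | h
  · obtain ⟨t, ht0, -, e⟩ := mem_seg h
    exact exp_ne_pos hρ0 ht0 (by linarith) hφ1 (mul_right_cancel₀ he (add_left_cancel e))
  · rw [segment_symm] at h
    obtain ⟨t, ht0, -, e⟩ := mem_seg h
    rw [er, ← mul_assoc] at e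
    have e' := mul_right_cancel₀ he (add_left_cancel e)
    refine exp_ne_pos hρ0 (mul_nonneg ht0 hr.le) (φ := φ - α j) (by linarith) (by linarith) ?_
    push_cast
    rw [sub_mul, Complex.exp_sub, ← mul_div_assoc, e']
    have := Complex.exp_ne_zero (α j * I)
    field_simp

theorem mem_sector {j : ℤ} {ε ρ φ : ℝ} (h0 : 0 < ρ) (h1 : ρ < ε) (h2 : α j < φ)
    (h3 : φ < 2 * Real.pi) : p j + ρ * exp (φ * I) * (p (j + 1) - p j) ∈ sector p α j ε :=
  ⟨(ρ, φ), ⟨⟨h0, h1⟩, h2, h3⟩, rfl⟩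

open Filter Topology in
/-- The right-hand sectors at the two ends of an edge are joined by a thin strip along its
right side. -/
theorem sector_step (H : SimplePolygon m p α) (j : ℤ)
    (h : ∃ ε > 0, sector p α j ε ⊆ outer (carrier p)) :
    ∃ ε > 0, sector p α (j + 1) ε ⊆ outer (carrier p) := by
  obtain ⟨ε, hε, hout⟩ := h
  obtain ⟨ε', hε', hdis⟩ := H.sector_disjoint (j + 1)
  obtain ⟨r, hr, er⟩ := H.ang (j + 1)
  rw [add_sub_cancel_right] at er
  have he := H.ne j
  have hen : 0 < ‖p (j + 1) - p j‖ := norm_pos_iff.2 he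
  set e := p (j + 1) - p j with hedef
  obtain ⟨δ, hδ0, hδ⟩ := exists_between (show 0 < min (1 / 2) (min ε (ε' / r)) by positivity)
  obtain ⟨hδ1, hδ2, hδ3⟩ : δ < 1 / 2 ∧ δ < ε ∧ δ < ε' / r := by
    simpa only [lt_min_iff] using hδ
  rw [lt_div_iff₀ hr] at hδ3
  -- the middle part of the edge keeps a positive distance from all other edges
  have hc := H.isClosed_edges fun i => ¬ ((m : ℤ) ∣ j - i)
  have hK : IsCompact ((fun t : ℝ => p j + t * e) '' Set.Icc δ (1 - δ)) :=
    isCompact_Icc.image (by fun_prop)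
  obtain ⟨η, hη, hthick⟩ := hK.exists_thickening_subset_open hc.isOpen_compl (by
    rintro _ ⟨t, ⟨ht0, ht1⟩, rfl⟩ ⟨i, hi, hz⟩
    obtain ⟨i', s, hi', hs0, hs1, e1⟩ := mem_edge hz
    obtain ⟨rfl, hd⟩ := H.inj j i' t s (by linarith) (by linarith) hs0 hs1 e1
    rcases hi' with rfl | ⟨_, rfl⟩
    · exact hi hd
    · linarith)
  have strip : ∀ t s : ℝ, t ∈ Set.Icc δ (1 - δ) → 0 < s → s < η / ‖e‖ →
      p j + (t - s * I) * e ∈ (carrier p)ᶜ := by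
    intro t s ht hs0 hs1 hz
    obtain ⟨i, hi⟩ := Set.mem_iUnion.1 hz
    by_cases hd : (m : ℤ) ∣ j - i
    · have hd' : (m : ℤ) ∣ i - j := (dvd_sub_comm).1 hd
      rw [H.eq_of_dvd hd', H.eq_of_dvd (i := i + 1) (j := j + 1) (by convert hd' using 1; ring)]
        at hi
      obtain ⟨t', -, -, e1⟩ := mem_seg hi
      have := congrArg Complex.im (mul_right_cancel₀ he (add_left_cancel e1))
      simp at this
      linarith
    · refine hthick (Metric.mem_thickening_iff.2 ⟨p j + t * e, ⟨t, ht, rfl⟩, ?_⟩) ⟨i, hd, hi⟩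
      rw [dist_add_left, dist_eq_norm, ← sub_mul, norm_mul]
      rw [lt_div_iff₀ hen] at hs1
      simpa [abs_of_pos hs0] using hs1
  -- for small offsets the two ends of the strip reach into the sectors
  have t1 : Tendsto (fun s : ℝ => (δ : ℂ) - s * I) (𝓝[>] 0) (𝓝 δ) := by
    refine Tendsto.mono_left ?_ nhdsWithin_le_nhds
    have : Continuous fun s : ℝ => (δ : ℂ) - s * I := by fun_prop
    simpa using this.tendsto 0
  have t2 : Tendsto (fun s : ℝ => (δ : ℂ) + s * I) (𝓝[>] 0) (𝓝 δ) := by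
    refine Tendsto.mono_left ?_ nhdsWithin_le_nhds
    have : Continuous fun s : ℝ => (δ : ℂ) + s * I := by fun_prop
    simpa using this.tendsto 0
  have hδs : (δ : ℂ) ∈ Complex.slitPlane := Complex.ofReal_mem_slitPlane.2 hδ0
  have a1 := (Complex.continuousAt_arg hδs).tendsto.comp t1
  have a2 := (Complex.continuousAt_arg hδs).tendsto.comp t2
  have n1 := t1.norm
  have n2 := t2.norm
  rw [Complex.arg_ofReal_of_nonneg hδ0.le] at a1 a2
  rw [Complex.norm_of_nonneg hδ0.le] at n1 n2
  have hαj := H.lt j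
  have hαj1 := H.lt (j + 1)
  have ev : ∀ᶠ s : ℝ in 𝓝[>] 0, 0 < s ∧ s < η / ‖e‖ ∧ ‖(δ : ℂ) - s * I‖ < ε ∧
      ‖(δ : ℂ) + s * I‖ < ε' / r ∧ α j - 2 * Real.pi < arg ((δ : ℂ) - s * I) ∧
      arg ((δ : ℂ) + s * I) < 2 * Real.pi - α (j + 1) := by
    have m1 : ∀ᶠ s : ℝ in 𝓝[>] 0, 0 < s := self_mem_nhdsWithin
    have m2 : ∀ᶠ s : ℝ in 𝓝[>] 0, s < η / ‖e‖ :=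
      nhdsWithin_le_nhds (Iio_mem_nhds (by positivity))
    filter_upwards [m1, m2, n1.eventually (gt_mem_nhds hδ2),
      n2.eventually (gt_mem_nhds ((lt_div_iff₀ hr).2 hδ3)),
      a1.eventually (lt_mem_nhds (show α j - 2 * Real.pi < 0 by linarith)),
      a2.eventually (gt_mem_nhds (show 0 < 2 * Real.pi - α (j + 1) by linarith))]
      with s q1 q2 q3 q4 q5 q6
    exact ⟨q1, q2, q3, q4, q5, q6⟩
  obtain ⟨s, s0, s1, s2, s3, s4, s5⟩ := ev.exists
  have x1 : p j + ((δ : ℝ) - s * I) * e ∈ sector p α j ε := by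
    have him : ((δ : ℂ) - s * I).im < 0 := by simpa using s0
    have hneg : arg ((δ : ℂ) - s * I) < 0 := Complex.arg_neg_iff.2 him
    have := mem_sector (p := p) (α := α) (j := j) (ρ := ‖(δ : ℂ) - s * I‖)
      (φ := arg ((δ : ℂ) - s * I) + 2 * Real.pi)
      (norm_pos_iff.2 (fun h0 => by rw [h0] at him; simp at him)) s2 (by linarith) (by linarith)
    push_cast at this
    rwa [add_mul, Complex.exp_add, Complex.exp_two_pi_mul_I, mul_one,
      Complex.norm_mul_exp_arg_mul_I] at this
  have x2 : p j + (((1 - δ : ℝ) : ℂ) - s * I) * e ∈ sector p α (j + 1) ε' := by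
    have him : 0 < ((δ : ℂ) + s * I).im := by simpa using s0
    have hpos : 0 < arg ((δ : ℂ) + s * I) := by
      rcases (Complex.arg_nonneg_iff.2 him.le).lt_or_eq with h | h
      · exact h
      · rw [eq_comm, Complex.arg_eq_zero_iff] at h; linarith [h.2]
    have := mem_sector (p := p) (α := α) (j := j + 1) (ρ := ‖(δ : ℂ) + s * I‖ * r)
      (φ := arg ((δ : ℂ) + s * I) + α (j + 1))
      (mul_pos (norm_pos_iff.2 (fun h0 => by rw [h0] at him; simp at him)) hr)
      ((lt_div_iff₀ hr).1 s3) (by linarith) (by linarith)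
    convert this using 1
    have e5 : p (j + 1) = p j + e := by rw [hedef]; ring
    have e6 := Complex.norm_mul_exp_arg_mul_I ((δ : ℂ) + s * I)
    push_cast
    rw [add_mul (arg ((δ : ℂ) + s * I) : ℂ), Complex.exp_add]
    calc p j + (1 - δ - s * I) * e = p (j + 1) + (δ + s * I) * (p j - p (j + 1)) := by
          rw [hedef]; ring
      _ = _ := by
          rw [er]; conv_lhs => rw [← e6]
          ring
  have hstrip : IsPreconnected ((fun t : ℝ => p j + ((t : ℂ) - s * I) * e) '' Set.Icc δ (1 - δ)) :=
    isPreconnected_Icc.image _ (by fun_prop)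
  have y1 := hout x1
  have y2 := outer_of_preconnected hstrip (by rintro _ ⟨t, ht, rfl⟩; exact strip t s ht s0 s1)
    ⟨δ, ⟨le_rfl, by linarith⟩, rfl⟩ ⟨1 - δ, ⟨by linarith, le_rfl⟩, rfl⟩ y1
  exact ⟨ε', hε', fun z hz => outer_of_preconnected (sector_preconnected _ _) hdis x2 hz y2⟩

/-- At the extreme corner the right-hand sector contains the beginning of the ray pointing west,
which leads to infinity without meeting the curve. -/
theorem sector_zero (H : SimplePolygon m p α) (L : LeftAtMin p) :
    ∃ ε > 0, sector p α 0 ε ⊆ outer (carrier p) := by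
  obtain ⟨ε, hε, hdis⟩ := H.sector_disjoint 0
  have hA := H.alpha_zero L
  have b1 := L.bounds 1
  have b2 := L.bounds (-1)
  have hpi := Real.pi_pos
  have he := H.ne 0
  rw [zero_add] at he
  set e := p 1 - p 0
  have hen : 0 < ‖e‖ := norm_pos_iff.2 he
  -- the ray pointing west from the extreme corner
  have x1 := mem_sector (p := p) (α := α) (j := 0) (ε := ε) (ρ := ε / 2) (φ := Real.pi - arg e)
    (by linarith) (by linarith) (by linarith) (by linarith)
  have e1 : p 0 + (ε / 2 : ℝ) * exp ((Real.pi - arg e : ℝ) * I) * (p (0 + 1) - p 0) =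
      p 0 - (ε / 2 * ‖e‖ : ℝ) := by
    have e6 := Complex.norm_mul_exp_arg_mul_I e
    have := Complex.exp_ne_zero (arg e * I)
    rw [zero_add]
    change p 0 + (ε / 2 : ℝ) * exp ((Real.pi - arg e : ℝ) * I) * e = _
    push_cast
    rw [sub_mul, Complex.exp_sub, Complex.exp_pi_mul_I]
    field_simp
    linear_combination (ε : ℂ) * e6
  rw [e1] at x1
  set A : Set ℂ := (fun r : ℝ => p 0 - r) '' Set.Ioi 0 with hAdef
  have hAc : IsPreconnected A := isPreconnected_Ioi.image _ (by fun_prop)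
  have hAd : A ⊆ (carrier p)ᶜ := by
    rintro _ ⟨r, hr, rfl⟩ hz
    obtain ⟨i, hi⟩ := Set.mem_iUnion.1 hz
    have hcv : Convex ℝ {z : ℂ | (p 0).re ≤ z.re} := convex_halfSpace_re_ge _
    have hre : ∀ i, (p 0).re ≤ (p i).re := fun i => by
      rcases L.min i with h | h
      · exact h.le
      · exact h.1.ge
    have := hcv.segment_subset (hre i) (hre (i + 1)) hi
    simp at this hr
    linarith
  have hx : p 0 - (ε / 2 * ‖e‖ : ℝ) ∈ A := ⟨ε / 2 * ‖e‖, by simp; positivity, rfl⟩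
  have hxo : p 0 - (ε / 2 * ‖e‖ : ℝ) ∈ outer (carrier p) := by
    refine ⟨hAd hx, fun hb => ?_⟩
    obtain ⟨R, hR⟩ := (hb.subset (hAc.subset_connectedComponentIn hx hAd)).exists_norm_le
    have h1 := hR (p 0 - ((|R| + ‖p 0‖ + 1 : ℝ) : ℂ)) ⟨|R| + ‖p 0‖ + 1, by
      simp; positivity, rfl⟩
    have h2 := norm_sub_norm_le ((|R| + ‖p 0‖ + 1 : ℝ) : ℂ) (p 0)
    rw [norm_sub_rev, Complex.norm_of_nonneg (by positivity)] at h2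
    linarith [le_abs_self R]
  exact ⟨ε, hε, fun z hz => outer_of_preconnected (sector_preconnected _ _) hdis x1 hz hxo⟩

theorem sector_outer (H : SimplePolygon m p α) (L : LeftAtMin p) (n : ℕ) :
    ∃ ε > 0, sector p α n ε ⊆ outer (carrier p) := by
  induction n with
  | zero => exact H.sector_zero L
  | succ n ih => exact_mod_cast H.sector_step n ih

/-! ### Orientation of a simple polygon -/

theorem shift (H : SimplePolygon m p α) (k : ℤ) :
    SimplePolygon m (fun i => p (i + k)) (fun i => α (i + k)) where
  three := H.three
  per i := by rw [add_right_comm, H.per]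
  inj i j s t h1 h2 h3 h4 h := by
    simp only [add_right_comm _ (1 : ℤ) k] at h
    have := H.inj (i + k) (j + k) s t h1 h2 h3 h4 h
    rwa [add_sub_add_right_eq_sub] at this
  perα i := by rw [add_right_comm, H.perα]
  pos i := H.pos _
  lt i := H.lt _
  ang i := by
    simp only [add_right_comm _ (1 : ℤ) k, sub_add_eq_add_sub i 1 k]
    exact H.ang (i + k)

/-- Traversing the polygon backwards replaces the angles `α` by `2π - α`. -/
theorem reverse (H : SimplePolygon m p α) :
    SimplePolygon m (fun i => p (-i)) (fun i => 2 * Real.pi - α (-i)) where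
  three := H.three
  per i := by rw [← H.per]; congr 1; ring
  inj i j s t hs0 hs1 ht0 ht1 h := by
    -- a half-open edge traversed backwards is a half-open edge up to moving one endpoint
    have key : ∀ (i : ℤ) (s : ℝ), 0 ≤ s → s < 1 → ∃ (i' : ℤ) (s' : ℝ), 0 ≤ s' ∧ s' < 1 ∧
        p (-i) + s * (p (-(i + 1)) - p (-i)) = p i' + s' * (p (i' + 1) - p i') ∧
        ((s = 0 ∧ s' = 0 ∧ i' = -i) ∨ (0 < s ∧ s' = 1 - s ∧ i' = -i - 1)) := by
      intro i s h0 h1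
      rcases h0.lt_or_eq with h0 | rfl
      · refine ⟨-i - 1, 1 - s, by linarith, by linarith, ?_, Or.inr ⟨h0, rfl, rfl⟩⟩
        rw [sub_add_cancel, neg_add, ← sub_eq_add_neg (-i) 1]
        push_cast; ring
      · exact ⟨-i, 0, le_rfl, by norm_num, by simp, Or.inl ⟨rfl, rfl, rfl⟩⟩
    obtain ⟨i', s', a1, a2, a3, a4⟩ := key i s hs0 hs1
    obtain ⟨j', t', b1, b2, b3, b4⟩ := key j t ht0 ht1
    obtain ⟨e1, k, hk⟩ := H.inj i' j' s' t' a1 a2 b1 b2 (by rw [← a3, ← b3]; exact h)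
    rcases a4 with ⟨rfl, rfl, rfl⟩ | ⟨h1, rfl, rfl⟩ <;>
      rcases b4 with ⟨rfl, rfl, rfl⟩ | ⟨h2, rfl, rfl⟩
    · exact ⟨rfl, -k, by linarith⟩
    · linarith
    · linarith
    · exact ⟨by linarith, -k, by linarith⟩
  perα i := by rw [← H.perα]; congr 3; ring
  pos i := by have := H.lt (-i); linarith
  lt i := by have := H.pos (-i); linarith
  ang i := by
    obtain ⟨r, hr, e⟩ := H.ang (-i)
    refine ⟨r⁻¹, inv_pos.2 hr, ?_⟩
    rw [show -(i - 1) = -i + 1 by ring, show -(i + 1) = -i - 1 by ring, e]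
    push_cast
    rw [sub_mul, Complex.exp_sub, Complex.exp_two_pi_mul_I]
    have := Complex.exp_ne_zero (α (-i) * I)
    have hr' : (r : ℂ) ≠ 0 := by exact_mod_cast hr.ne'
    field_simp

theorem sum_shift {f : ℤ → ℝ} (hf : ∀ i, f (i + m) = f i) (k : ℤ) :
    ∑ l ∈ Finset.range m, f (l + k) = ∑ l ∈ Finset.range m, f l := by
  have step : ∀ k : ℤ, ∑ l ∈ Finset.range m, f (l + (k + 1)) =
      ∑ l ∈ Finset.range m, f (l + k) := by
    intro k
    have h1 := Finset.sum_range_succ (fun l : ℕ => f (l + k)) m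
    have h2 := Finset.sum_range_succ' (fun l : ℕ => f (l + k)) m
    have h3 : f (m + k) = f k := by rw [add_comm, hf]
    have h4 : ∑ l ∈ Finset.range m, f (((l + 1 : ℕ) : ℤ) + k) =
        ∑ l ∈ Finset.range m, f (l + (k + 1)) :=
      Finset.sum_congr rfl fun l _ => by congr 1; push_cast; ring
    simp only [Nat.cast_zero, zero_add] at h2
    linarith
  induction k using Int.induction_on with
  | zero => simp
  | succ k ih => rw [step, ih]
  | pred k ih => rw [← ih, ← step (-k - 1), sub_add_cancel]

theorem sum_neg {f : ℤ → ℝ} (hf : ∀ i, f (i + m) = f i) :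
    ∑ l ∈ Finset.range m, f (-l) = ∑ l ∈ Finset.range m, f l := by
  rw [← Finset.sum_range_reflect, ← sum_shift hf (1 - m)]
  apply Finset.sum_congr rfl
  intro l hl
  rw [Finset.mem_range] at hl
  congr 1
  omega

theorem carrier_shift (k : ℤ) : carrier (fun i => p (i + k)) = carrier p := by
  unfold carrier
  refine Set.Subset.antisymm ?_ ?_
  · refine Set.iUnion_subset fun i => ?_
    simp only [add_right_comm _ (1 : ℤ) k]
    exact Set.subset_iUnion (fun i => segment ℝ (p i) (p (i + 1))) (i + k)
  · refine Set.iUnion_subset fun i => ?_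
    refine subset_trans (le_of_eq ?_)
      (Set.subset_iUnion (fun i => segment ℝ (p (i + k)) (p (i + 1 + k))) (i - k))
    simp only [add_right_comm _ (1 : ℤ) k, sub_add_cancel]

theorem carrier_neg : carrier (fun i => p (-i)) = carrier p := by
  have key : ∀ q : ℤ → ℂ, carrier (fun i => q (-i)) ⊆ carrier q := by
    intro q
    refine Set.iUnion_subset fun i => ?_
    refine subset_trans (le_of_eq ?_)
      (Set.subset_iUnion (fun i => segment ℝ (q i) (q (i + 1))) (-i - 1))
    rw [segment_symm]
    simp only [sub_add_cancel]
    congr 2; ring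
  refine (key p).antisymm ?_
  simpa using key (fun i => p (-i))

theorem exists_lex_min (H : SimplePolygon m p α) :
    ∃ k : ℤ, ∀ i, (p k).re < (p i).re ∨ ((p i).re = (p k).re ∧ (p k).im ≤ (p i).im) := by
  have hm := H.three
  obtain ⟨k, -, hk⟩ := Finset.exists_min_image (Finset.range m)
    (fun i : ℕ => toLex ((p i).re, (p i).im)) ⟨0, by simp; omega⟩
  refine ⟨k, fun i => ?_⟩
  have hm0 : (0 : ℤ) < m := by omega
  have h1 := Int.emod_nonneg i hm0.ne'
  have h2 := Int.emod_lt_of_pos i hm0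
  have h3 := hk (i % m).toNat (by simp; omega)
  rw [Prod.Lex.toLex_le_toLex, Int.toNat_of_nonneg h1] at h3
  rw [H.eq_of_dvd (i := i) (j := i % m) Int.dvd_self_sub_emod]
  rcases h3 with h | h
  · exact Or.inl h
  · exact Or.inr ⟨h.1.symm, h.2⟩

theorem arg_ne (H : SimplePolygon m p α) (k : ℤ) :
    arg (p (k + 1) - p k) ≠ arg (p (k - 1) - p k) := by
  intro h
  obtain ⟨r, hr, e⟩ := H.ang k
  have he := H.ne k
  have hr' : (r : ℂ) ≠ 0 := by exact_mod_cast hr.ne'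
  have hn : p (k - 1) - p k ≠ 0 := by
    rw [e]; exact mul_ne_zero (mul_ne_zero hr' (Complex.exp_ne_zero _)) he
  rw [Complex.arg_eq_arg_iff he hn] at h
  refine exp_ne_pos hr (t := ‖p (k - 1) - p k‖ / ‖p (k + 1) - p k‖) (by positivity) (H.pos k)
    (H.lt k) (mul_right_cancel₀ he ?_)
  rw [← e]
  push_cast
  exact h.symm

/-- Conclusion for a polygon having a left turn at its lexicographic minimum, without a choice of
starting index. -/
theorem right_outer (H : SimplePolygon m p α) {k : ℤ} (L : LeftAtMin (fun i => p (i + k))) :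
    ∑ l ∈ Finset.range m, (Real.pi - α l) = 2 * Real.pi ∧
      ∀ n : ℤ, ∃ ε > 0, ∀ ρ φ : ℝ, 0 < ρ → ρ < ε → α n < φ → φ < 2 * Real.pi →
        p n + ρ * exp (φ * I) * (p (n + 1) - p n) ∈ outer (carrier p) := by
  have H' := H.shift k
  refine ⟨?_, fun n => ?_⟩
  · rw [← H'.turning_sum L]
    exact (sum_shift (f := fun i => Real.pi - α i) (fun i => by rw [H.perα]) k).symm
  · have hm := H.three
    have hm0 : (0 : ℤ) < m := by omega
    have h1 := Int.emod_nonneg (n - k) hm0.ne'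
    have hd : (m : ℤ) ∣ (n - k) % m + k - n := by
      rw [show (n - k) % m + k - n = -(n - k - (n - k) % m) by ring]
      exact dvd_neg.2 Int.dvd_self_sub_emod
    obtain ⟨ε, hε, hs⟩ := H'.sector_outer L ((n - k) % m).toNat
    rw [carrier_shift, Int.toNat_of_nonneg h1] at hs
    refine ⟨ε, hε, fun ρ φ a b c d => ?_⟩
    have hα : α ((n - k) % m + k) = α n := by
      obtain ⟨c, hc⟩ := hd
      rw [show (n - k) % m + k = n + c * m by linarith]
      have : Function.Periodic α (m : ℤ) := H.perα
      simpa using this.int_mul c n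
    have := hs (mem_sector (p := fun i => p (i + k)) (α := fun i => α (i + k))
      (j := (n - k) % m) a b (by simpa only [hα] using c) d)
    rw [H.eq_of_dvd hd, H.eq_of_dvd (i := (n - k) % m + 1 + k) (j := n + 1)
      (by convert hd using 1; ring)] at this
    exact this

/-- A simple polygon is oriented one way or the other: its left (resp. right) angles add up to
`(m - 2) π`, and close to each corner everything on the other side of the curve lies in an unbounded
component of the complement. -/
theorem orientation (H : SimplePolygon m p α) :
    (∑ l ∈ Finset.range m, (Real.pi - α l) = 2 * Real.pi ∧
      ∀ n : ℤ, ∃ ε > 0, ∀ ρ φ : ℝ, 0 < ρ → ρ < ε → α n < φ → φ < 2 * Real.pi →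
        p n + ρ * exp (φ * I) * (p (n + 1) - p n) ∈ outer (carrier p)) ∨
    (∑ l ∈ Finset.range m, (α l - Real.pi) = 2 * Real.pi ∧
      ∀ n : ℤ, ∃ ε > 0, ∀ ρ φ : ℝ, 0 < ρ → ρ < ε → 0 < φ → φ < α n →
        p n + ρ * exp (φ * I) * (p (n + 1) - p n) ∈ outer (carrier p)) := by
  obtain ⟨k, hk⟩ := H.exists_lex_min
  rcases lt_or_gt_of_ne (H.arg_ne k) with h | h
  · left
    refine H.right_outer (k := k) ⟨fun i => ?_, ?_⟩
    · simpa using hk (i + k)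
    · simp only [zero_add, add_comm (1 : ℤ) k, add_comm (-1 : ℤ) k, ← sub_eq_add_neg]
      exact h
  · right
    obtain ⟨h1, h2⟩ := H.reverse.right_outer (k := -k) ⟨fun i => by
      simpa using hk (-(i + -k)), by
      rw [show -(0 + -k) = k by ring, show -(1 + -k) = k - 1 by ring,
        show -(-1 + -k) = k + 1 by ring]
      exact h⟩
    constructor
    · rw [← h1, ← sum_neg (f := fun i => α i - Real.pi) (fun i => by rw [H.perα])]
      exact Finset.sum_congr rfl fun l _ => by ring
    · intro n
      obtain ⟨ε, hε, hs⟩ := h2 (-n)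
      rw [carrier_neg, neg_neg, show -(-n + 1) = n - 1 by ring] at hs
      obtain ⟨r, hr, e⟩ := H.ang n
      refine ⟨ε * r, mul_pos hε hr, fun ρ φ a b c d => ?_⟩
      have := hs (ρ / r) (φ + 2 * Real.pi - α n) (div_pos a hr) ((div_lt_iff₀ hr).2 b)
        (by linarith) (by linarith)
      convert this using 2
      rw [e]
      push_cast
      rw [sub_mul, add_mul, Complex.exp_sub, Complex.exp_add, Complex.exp_two_pi_mul_I]
      have := Complex.exp_ne_zero (α n * I)
      have hr' : (r : ℂ) ≠ 0 := by exact_mod_cast hr.ne'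
      field_simp

/-! ### Counting octilinear directions into the interior -/

/-- If at the corners of an octilinear polygon the elements of `S` inject into pairs
(corner, octilinear direction) whose directions lead neither along the curve nor into an unbounded
component of the complement, then `|S| ≤ 3 m - 8`: a corner of inner angle `a π / 4` leaves room for
at most `a - 1` such directions. -/
theorem count_bound (H : SimplePolygon m p α) {a : ℤ → ℕ} (ha : ∀ i, α i = Real.pi / 4 * a i)
    {β : Type*} {S : Set β} (j c : β → ℕ) (hj : ∀ x ∈ S, j x < m) (hc : ∀ x ∈ S, c x < 8)
    (hinj : ∀ x ∈ S, ∀ y ∈ S, j x = j y → c x = c y → x = y)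
    (hdir : ∀ x ∈ S, ∃ ρ₀ > (0 : ℝ), ∀ ρ : ℝ, 0 < ρ → ρ < ρ₀ →
      p (j x) + ρ * exp ((Real.pi / 4 * c x : ℝ) * I) * (p (j x + 1) - p (j x)) ∉ carrier p ∧
      p (j x) + ρ * exp ((Real.pi / 4 * c x : ℝ) * I) * (p (j x + 1) - p (j x)) ∉
        outer (carrier p)) :
    S.ncard + 8 ≤ 3 * m := by
  have hpi := Real.pi_pos
  have a0 : ∀ i, 0 < a i := fun i => by
    rcases Nat.eq_zero_or_pos (a i) with h | h
    · have := H.pos i; rw [ha, h] at this; simp at this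
    · exact h
  have a8 : ∀ i, a i < 8 := fun i => by
    have := H.lt i
    rw [ha] at this
    have : (a i : ℝ) < 8 := by nlinarith
    exact_mod_cast this
  have c0 : ∀ x ∈ S, c x ≠ 0 := by
    intro x hx h
    obtain ⟨ρ₀, hρ₀, hd⟩ := hdir x hx
    have := (hd (min (ρ₀ / 2) 1) (by positivity) (by
      have := min_le_left (ρ₀ / 2) 1; linarith)).1
    apply this
    simp only [h, Nat.cast_zero, mul_zero, ofReal_zero, zero_mul, Complex.exp_zero, mul_one]
    exact Set.mem_iUnion.2 ⟨j x, seg_mem (by positivity) (min_le_right _ _)⟩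
  have ca : ∀ x ∈ S, c x ≠ a (j x) := by
    intro x hx h
    obtain ⟨ρ₀, hρ₀, hd⟩ := hdir x hx
    obtain ⟨r, hr, e⟩ := H.ang (j x)
    have h1 := (hd (min (ρ₀ / 2) 1 * min r 1) (by positivity) (by
      have := min_le_left (ρ₀ / 2) 1
      have := min_le_right r 1
      have : 0 < min (ρ₀ / 2) 1 := by positivity
      nlinarith)).1
    apply h1
    have h2 : p (j x) + ((min (ρ₀ / 2) 1 * min r 1 / r : ℝ) : ℂ) * (p (j x - 1) - p (j x)) ∈
        segment ℝ (p (j x)) (p (j x - 1)) := by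
      apply seg_mem (by positivity)
      rw [div_le_one hr]
      have := min_le_right (ρ₀ / 2) 1
      have := min_le_left r 1
      have : 0 < min r 1 := by positivity
      nlinarith
    rw [segment_symm] at h2
    refine Set.mem_iUnion.2 ⟨j x - 1, ?_⟩
    rw [sub_add_cancel]
    convert h2 using 2
    rw [e, h, ← ha]
    have hr' : (r : ℂ) ≠ 0 := by exact_mod_cast hr.ne'
    push_cast
    field_simp
  -- the bound for any choice of admissible intervals of directions
  have main : ∀ lo hi : ℤ → ℕ, (∀ i, lo i < hi i) →
      (∑ l ∈ Finset.range m, ((hi l : ℤ) - lo l) = 4 * m - 8) →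
      (∀ x ∈ S, lo (j x) < c x ∧ c x < hi (j x)) → S.ncard + 8 ≤ 3 * m := by
    intro lo hi hlh hsum hx
    set T : Finset (Σ _ : ℕ, ℕ) := (Finset.range m).sigma fun l => Finset.Ioo (lo l) (hi l)
    have h1 : S.ncard ≤ (T : Set (Σ _ : ℕ, ℕ)).ncard := by
      refine Set.ncard_le_ncard_of_injOn (fun x => ⟨j x, c x⟩) ?_ ?_ T.finite_toSet
      · intro x hxI
        simp only [T, Finset.coe_sigma, Set.mem_sigma_iff, Finset.coe_range, Set.mem_Iio,
          Finset.coe_Ioo, Set.mem_Ioo]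
        exact ⟨hj x hxI, hx x hxI⟩
      · intro x hxI y hyI hxy
        simp only [Sigma.mk.injEq, heq_eq_eq] at hxy
        exact hinj x hxI y hyI hxy.1 hxy.2
    rw [Set.ncard_coe_finset, Finset.card_sigma] at h1
    simp only [Nat.card_Ioo] at h1
    have h2 : ((∑ l ∈ Finset.range m, (hi l - lo l - 1) : ℕ) : ℤ) =
        ∑ l ∈ Finset.range m, ((hi l : ℤ) - lo l) - m := by
      have : ∀ l ∈ Finset.range m, ((hi l - lo l - 1 : ℕ) : ℤ) = ((hi l : ℤ) - lo l) - 1 :=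
        fun l _ => by have := hlh l; omega
      push_cast [Finset.sum_congr rfl this]
      rw [Finset.sum_sub_distrib]; simp
    rw [hsum] at h2
    omega
  rcases H.orientation with ⟨hs, ho⟩ | ⟨hs, ho⟩
  · refine main (fun _ => 0) a a0 ?_ ?_
    · have e1 : ∑ l ∈ Finset.range m, (Real.pi - α l) =
          Real.pi / 4 * ((4 * m : ℝ) - ∑ l ∈ Finset.range m, (a l : ℝ)) := by
        rw [Finset.sum_sub_distrib, mul_sub, Finset.mul_sum]
        simp only [ha, Finset.sum_const, Finset.card_range, nsmul_eq_mul]; ring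
      rw [e1] at hs
      have e2 : (4 * m : ℝ) - ∑ l ∈ Finset.range m, (a l : ℝ) = 8 := by
        have : Real.pi / 4 * ((4 * m : ℝ) - ∑ l ∈ Finset.range m, (a l : ℝ) - 8) = 0 := by linarith
        rcases mul_eq_zero.1 this with h | h <;> linarith
      have e3 : (4 * m : ℤ) - ∑ l ∈ Finset.range m, (a l : ℤ) = 8 := by exact_mod_cast e2
      simp only [Nat.cast_zero, sub_zero]
      linarith
    · intro x hx
      refine ⟨Nat.pos_of_ne_zero (c0 x hx), ?_⟩
      by_contra hcon
      have hlt : a (j x) < c x := lt_of_le_of_ne (not_lt.1 hcon) (ca x hx).symm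
      obtain ⟨ρ₀, hρ₀, hd⟩ := hdir x hx
      obtain ⟨ε, hε, hs⟩ := ho (j x)
      have hb : 0 < min ρ₀ ε / 2 := by positivity
      refine (hd (min ρ₀ ε / 2) hb ?_).2 (hs (min ρ₀ ε / 2) (Real.pi / 4 * c x) hb ?_ ?_ ?_)
      · have := min_le_left ρ₀ ε; linarith
      · have := min_le_right ρ₀ ε; linarith
      · rw [ha]; have : (a (j x) : ℝ) < c x := by exact_mod_cast hlt
        gcongr
      · have : (c x : ℝ) < 8 := by exact_mod_cast hc x hx
        nlinarith
  · refine main a (fun _ => 8) a8 ?_ ?_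
    · have e1 : ∑ l ∈ Finset.range m, (α l - Real.pi) =
          Real.pi / 4 * (∑ l ∈ Finset.range m, (a l : ℝ) - (4 * m : ℝ)) := by
        rw [Finset.sum_sub_distrib, mul_sub, Finset.mul_sum]
        simp only [ha, Finset.sum_const, Finset.card_range, nsmul_eq_mul]; ring
      rw [e1] at hs
      have e2 : ∑ l ∈ Finset.range m, (a l : ℝ) - (4 * m : ℝ) = 8 := by
        have : Real.pi / 4 * (∑ l ∈ Finset.range m, (a l : ℝ) - (4 * m : ℝ) - 8) = 0 := by linarith
        rcases mul_eq_zero.1 this with h | h <;> linarith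
      have e3 : ∑ l ∈ Finset.range m, (a l : ℤ) - (4 * m : ℤ) = 8 := by exact_mod_cast e2
      rw [Finset.sum_sub_distrib]
      simp only [Finset.sum_const, Finset.card_range, nsmul_eq_mul]
      push_cast
      linarith
    · intro x hx
      refine ⟨?_, hc x hx⟩
      by_contra hcon
      have hlt : c x < a (j x) := lt_of_le_of_ne (not_lt.1 hcon) (ca x hx)
      obtain ⟨ρ₀, hρ₀, hd⟩ := hdir x hx
      obtain ⟨ε, hε, hs⟩ := ho (j x)
      have hb : 0 < min ρ₀ ε / 2 := by positivity
      refine (hd (min ρ₀ ε / 2) hb ?_).2 (hs (min ρ₀ ε / 2) (Real.pi / 4 * c x) hb ?_ ?_ ?_)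
      · have := min_le_left ρ₀ ε; linarith
      · have := min_le_right ρ₀ ε; linarith
      · have : (0 : ℝ) < c x := by exact_mod_cast Nat.pos_of_ne_zero (c0 x hx)
        positivity
      · rw [ha]; have : (c x : ℝ) < a (j x) := by exact_mod_cast hlt
        gcongr

end SimplePolygon

/-! ### Octilinear directions -/

/-- A nonzero vector in one of the eight octilinear directions. -/
def IsOcti (z : ℂ) : Prop :=
  z ≠ 0 ∧ (z.im = 0 ∨ z.re = 0 ∨ z.im = z.re ∨ z.im = -z.re)

theorem IsOcti.neg {z : ℂ} (h : IsOcti z) : IsOcti (-z) := by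
  refine ⟨neg_ne_zero.2 h.1, ?_⟩
  simp only [Complex.neg_im, Complex.neg_re]
  rcases h.2 with h | h | h | h <;> simp [h]

theorem omega_pow (k : ℕ) :
    exp ((Real.pi / 4 * k : ℝ) * I) = exp ((Real.pi / 4 : ℝ) * I) ^ k := by
  rw [← Complex.exp_nat_mul]; congr 1; push_cast; ring

theorem omega_sq : exp ((Real.pi / 4 : ℝ) * I) ^ 2 = I := by
  rw [← Complex.exp_nat_mul, show ((2 : ℕ) : ℂ) * (((Real.pi / 4 : ℝ) : ℂ) * I) =
    Real.pi / 2 * I by push_cast; ring, Complex.exp_pi_div_two_mul_I]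

theorem omega_eq : (Real.sqrt 2 : ℂ) * exp ((Real.pi / 4 : ℝ) * I) = 1 + I := by
  have h : Real.sqrt 2 * Real.sqrt 2 = 2 := Real.mul_self_sqrt (by norm_num)
  apply Complex.ext
  · rw [Complex.re_ofReal_mul, Complex.exp_ofReal_mul_I_re, Real.cos_pi_div_four]
    simp; linarith
  · rw [Complex.im_ofReal_mul, Complex.exp_ofReal_mul_I_im, Real.sin_pi_div_four]
    simp; linarith

theorem IsOcti.exists_pow {z : ℂ} (h : IsOcti z) :
    ∃ (r : ℝ) (k : ℕ), 0 < r ∧ z = r * exp ((Real.pi / 4 : ℝ) * I) ^ k := by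
  set ω := exp ((Real.pi / 4 : ℝ) * I) with hω
  have w2 : ω ^ 2 = I := omega_sq
  have w1 : (Real.sqrt 2 : ℂ) * ω = 1 + I := omega_eq
  have w4 : ω ^ 4 = -1 := by
    rw [show ω ^ 4 = (ω ^ 2) ^ 2 by ring, w2, Complex.I_sq]
  have key : ∃ (s : ℝ) (k : ℕ), z = s * ω ^ k := by
    rcases h.2 with h | h | h | h
    · exact ⟨z.re, 0, by apply Complex.ext <;> simp [h]⟩
    · exact ⟨z.im, 2, by rw [w2]; apply Complex.ext <;> simp [h]⟩
    · refine ⟨z.re * Real.sqrt 2, 1, ?_⟩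
      rw [pow_one]; push_cast; rw [mul_assoc, w1]
      apply Complex.ext <;> simp [h]
    · refine ⟨-z.re * Real.sqrt 2, 3, ?_⟩
      rw [pow_succ', w2]; push_cast
      rw [show -(z.re : ℂ) * (Real.sqrt 2 : ℂ) * (ω * I) = -z.re * (Real.sqrt 2 * ω) * I by ring, w1]
      apply Complex.ext <;> simp [h]
  obtain ⟨s, k, hs⟩ := key
  rcases lt_trichotomy s 0 with h0 | rfl | h0
  · refine ⟨-s, k + 4, by linarith, ?_⟩
    rw [pow_add, w4, hs]; push_cast; ring
  · exact absurd (by simp [hs]) h.1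
  · exact ⟨s, k, h0, hs⟩

/-- Two octilinear vectors differ by a positive factor and a multiple of `π / 4`. -/
theorem IsOcti.ratio {z w : ℂ} (hz : IsOcti z) (hw : IsOcti w) :
    ∃ (r : ℝ) (c : ℕ), 0 < r ∧ c < 8 ∧ z = r * exp ((Real.pi / 4 * c : ℝ) * I) * w := by
  obtain ⟨r1, k1, h1, rfl⟩ := hz.exists_pow
  obtain ⟨r2, k2, h2, rfl⟩ := hw.exists_pow
  have hr2 : (r2 : ℂ) ≠ 0 := by exact_mod_cast h2.ne'
  have w8 : exp ((Real.pi / 4 : ℝ) * I) ^ 8 = 1 := by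
    rw [show (8 : ℕ) = 2 * 4 from rfl, pow_mul, omega_sq, Complex.I_pow_four]
  refine ⟨r1 / r2, (k1 + 7 * k2) % 8, by positivity, Nat.mod_lt _ (by norm_num), ?_⟩
  have e : ∀ n, exp ((Real.pi / 4 : ℝ) * I) ^ (n % 8) = exp ((Real.pi / 4 : ℝ) * I) ^ n := by
    intro n
    conv_rhs => rw [← Nat.div_add_mod n 8, pow_add, pow_mul, w8, one_pow, one_mul]
  rw [omega_pow, e, pow_add, pow_mul]
  set ω := exp ((Real.pi / 4 : ℝ) * I)
  have e2 : (ω ^ 7) ^ k2 * ω ^ k2 = 1 := by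
    rw [← mul_pow, ← pow_succ, w8, one_pow]
  push_cast
  calc (r1 : ℂ) * ω ^ k1 = r1 * ω ^ k1 * ((ω ^ 7) ^ k2 * ω ^ k2) := by rw [e2, mul_one]
    _ = _ := by field_simp

/-! ### Closing up octilinear chains to a polygon -/

/-- `K` is the image of a simple octilinear polygonal arc with the `n` segments
`[Q l, Q (l + 1)]`, `l < n`, parametrized by `l + t`. -/
structure Chain (n : ℕ) (Q : ℕ → ℂ) (K : Set ℂ) : Prop where
  pos : 1 ≤ n
  octi : ∀ l < n, IsOcti (Q (l + 1) - Q l)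
  mem : ∀ z, z ∈ K ↔ ∃ (l : ℕ) (t : ℝ), l < n ∧ 0 ≤ t ∧ t ≤ 1 ∧ z = Q l + t * (Q (l + 1) - Q l)
  inj : ∀ (l l' : ℕ) (t t' : ℝ), l < n → l' < n → 0 ≤ t → t ≤ 1 → 0 ≤ t' → t' ≤ 1 →
    Q l + t * (Q (l + 1) - Q l) = Q l' + t' * (Q (l' + 1) - Q l') → (l : ℝ) + t = l' + t'

theorem Chain.reverse {n : ℕ} {Q : ℕ → ℂ} {K : Set ℂ} (h : Chain n Q K) :
    Chain n (fun l => Q (n - l)) K := by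
  have flip : ∀ (l : ℕ) (t : ℝ), l < n →
      Q (n - l) + t * (Q (n - (l + 1)) - Q (n - l)) =
        Q (n - 1 - l) + ((1 - t : ℝ) : ℂ) * (Q (n - 1 - l + 1) - Q (n - 1 - l)) := by
    intro l t hl
    rw [show n - (l + 1) = n - 1 - l by omega, show n - l = n - 1 - l + 1 by omega]
    push_cast; ring
  refine ⟨h.pos, fun l hl => ?_, fun z => ?_, ?_⟩
  · have := (h.octi (n - 1 - l) (by omega)).neg
    rw [neg_sub] at this
    convert this using 2
    · congr 1; omega
    · congr 1; omega
  · rw [h.mem]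
    constructor
    · rintro ⟨l, t, hl, h0, h1, rfl⟩
      refine ⟨n - 1 - l, 1 - t, by omega, by linarith, by linarith, ?_⟩
      rw [flip _ _ (by omega), show n - 1 - (n - 1 - l) = l by omega, sub_sub_cancel]
    · rintro ⟨l, t, hl, h0, h1, rfl⟩
      exact ⟨n - 1 - l, 1 - t, by omega, by linarith, by linarith, flip _ _ hl⟩
  · intro l l' t t' hl hl' h0 h1 h0' h1' e
    simp only [flip l t hl, flip l' t' hl'] at e
    have := h.inj _ _ _ _ (by omega) (by omega) (by linarith) (by linarith) (by linarith)
      (by linarith) e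
    have e1 : ((n - 1 - l : ℕ) : ℝ) = n - 1 - l := by
      rw [Nat.sub_sub, Nat.cast_sub (by omega)]; push_cast; ring
    have e2 : ((n - 1 - l' : ℕ) : ℝ) = n - 1 - l' := by
      rw [Nat.sub_sub, Nat.cast_sub (by omega)]; push_cast; ring
    rw [e1, e2] at this
    linarith

/-- Running through chains with `n 0, n 1, …` segments one after the other, the `i`-th segment is
segment number `(loc n i).2` of chain number `(loc n i).1`. -/
def loc (n : ℕ → ℕ) : ℕ → ℕ × ℕ
  | 0 => (0, 0)
  | i + 1 => if (loc n i).2 + 1 < n (loc n i).1 then ((loc n i).1, (loc n i).2 + 1)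
      else ((loc n i).1 + 1, 0)

theorem loc_spec {n : ℕ → ℕ} (hn : ∀ q, 1 ≤ n q) (i : ℕ) :
    (loc n i).2 < n (loc n i).1 ∧ i = ∑ q ∈ Finset.range (loc n i).1, n q + (loc n i).2 := by
  induction i with
  | zero => exact ⟨hn 0, by simp [loc]⟩
  | succ i ih =>
    simp only [loc]
    split_ifs with h
    · exact ⟨h, by simp only; omega⟩
    · refine ⟨hn _, ?_⟩
      simp only [Finset.sum_range_succ]
      omega

theorem sum_mono (n : ℕ → ℕ) {q q' : ℕ} (h : q ≤ q') :
    ∑ i ∈ Finset.range q, n i ≤ ∑ i ∈ Finset.range q', n i :=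
  Finset.sum_le_sum_of_subset (Finset.range_mono h)

theorem loc_eq {n : ℕ → ℕ} (hn : ∀ q, 1 ≤ n q) {q l : ℕ} (hl : l < n q) :
    loc n (∑ i ∈ Finset.range q, n i + l) = (q, l) := by
  obtain ⟨h1, h2⟩ := loc_spec hn (∑ i ∈ Finset.range q, n i + l)
  set x := loc n (∑ i ∈ Finset.range q, n i + l)
  rcases lt_trichotomy x.1 q with h | h | h
  · have := sum_mono n (Nat.succ_le_of_lt h)
    rw [Finset.sum_range_succ] at this
    omega
  · rw [h] at h2
    exact Prod.ext h (by simp only; omega)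
  · have := sum_mono n (Nat.succ_le_of_lt h)
    rw [Finset.sum_range_succ] at this
    omega

/-- A closed cycle of `k` octilinear chains which are disjoint up to the joints forms a simple
polygon with all angles multiples of `π / 4`; its corners are the nodes of the chains, the first
node of chain `q` having the number of segments of the previous chains as its index. -/
theorem exists_polygon {k : ℕ} (hk : 3 ≤ k) {n : ℕ → ℕ} (hn : ∀ q, 1 ≤ n q) {Q : ℕ → ℕ → ℂ}
    {K : ℕ → Set ℂ} (hch : ∀ q < k, Chain (n q) (Q q) (K q))
    (hjoin : ∀ q < k, Q q (n q) = Q (q + 1) 0) (hclose : Q k 0 = Q 0 0)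
    (hcross : ∀ q < k, ∀ q' < k, ∀ (l l' : ℕ) (t t' : ℝ), l < n q → l' < n q' → 0 ≤ t → t < 1 →
      0 ≤ t' → t' < 1 → Q q l + t * (Q q (l + 1) - Q q l) =
        Q q' l' + t' * (Q q' (l' + 1) - Q q' l') → q = q') :
    ∃ (p : ℤ → ℂ) (α : ℤ → ℝ) (a : ℤ → ℕ),
      SimplePolygon (∑ q ∈ Finset.range k, n q) p α ∧ (∀ i, α i = Real.pi / 4 * a i) ∧
      SimplePolygon.carrier p = ⋃ q ∈ Finset.range k, K q ∧
      ∀ q < k, p ((∑ i ∈ Finset.range q, n i : ℕ) : ℤ) = Q q 0 ∧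
        p ((∑ i ∈ Finset.range q, n i : ℕ) + 1 : ℤ) = Q q 1 := by
  set m := ∑ q ∈ Finset.range k, n q with hm
  have hm3 : 3 ≤ m := by
    have : ∑ q ∈ Finset.range k, 1 ≤ m := Finset.sum_le_sum fun q _ => hn q
    simp at this; omega
  have hm0 : (0 : ℤ) < m := by omega
  set pN : ℕ → ℂ := fun i => Q (loc n i).1 (loc n i).2 with hpN
  have lt_k : ∀ i < m, (loc n i).1 < k := by
    intro i hi
    by_contra h
    have h1 := sum_mono n (not_lt.1 h)
    have := (loc_spec hn i).2
    omega
  have succ_pN : ∀ i < m, pN (i + 1) = Q (loc n i).1 ((loc n i).2 + 1) := by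
    intro i hi
    have h1 := (loc_spec hn i).1
    simp only [hpN, loc]
    split_ifs with h
    · rfl
    · simp only
      rw [← hjoin _ (lt_k i hi)]
      congr 1; omega
  have pN_m : pN m = pN 0 := by
    have : loc n m = (k, 0) := loc_eq hn (hn k)
    simp only [hpN, this, loc, hclose]
  set ix : ℤ → ℕ := fun i => (i % m).toNat with hix
  have ixc : ∀ i, (ix i : ℤ) = i % m := fun i => Int.toNat_of_nonneg (Int.emod_nonneg _ hm0.ne')
  have ixlt : ∀ i, ix i < m := fun i => by
    have := Int.emod_lt_of_pos i hm0; have := ixc i; omega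
  set p : ℤ → ℂ := fun i => pN (ix i) with hp
  have ixn : ∀ i : ℕ, i < m → ix i = i := fun i hi => by
    have := ixc i; rw [Int.emod_eq_of_lt (by omega) (by omega)] at this; omega
  have psucc : ∀ i, p (i + 1) = pN (ix i + 1) := by
    intro i
    have h1 := ixc i
    have h2 := ixc (i + 1)
    rw [← Int.emod_add_emod, ← h1] at h2
    rcases (Nat.succ_le_of_lt (ixlt i)).lt_or_eq with h | h
    · rw [Int.emod_eq_of_lt (by omega) (by omega)] at h2
      simp only [hp]; congr 1; omega
    · have h3 : ((ix i : ℤ) + 1) = m := by omega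
      rw [h3, Int.emod_self] at h2
      simp only [hp]
      rw [show ix (i + 1) = 0 by omega, ← pN_m]; congr 1; omega
  have pS : ∀ i, p (i + 1) = Q (loc n (ix i)).1 ((loc n (ix i)).2 + 1) := fun i => by
    rw [psucc, succ_pN _ (ixlt i)]
  have per : ∀ i, p (i + m) = p i := fun i => by simp only [hp, hix, Int.add_emod_right]
  have inj : ∀ (i j : ℤ) (s t : ℝ), 0 ≤ s → s < 1 → 0 ≤ t → t < 1 →
      p i + s * (p (i + 1) - p i) = p j + t * (p (j + 1) - p j) → s = t ∧ (m : ℤ) ∣ i - j := by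
    intro i j s t hs0 hs1 ht0 ht1 e
    rw [pS, pS] at e
    have hq := hcross _ (lt_k _ (ixlt i)) _ (lt_k _ (ixlt j)) _ _ s t (loc_spec hn (ix i)).1
      (loc_spec hn (ix j)).1 hs0 hs1 ht0 ht1 e
    have li := loc_spec hn (ix i)
    have lj := loc_spec hn (ix j)
    simp only [hp, hpN] at e
    rw [← hq] at e lj
    have h := (hch _ (lt_k _ (ixlt i))).inj _ _ s t li.1 lj.1 hs0 hs1.le ht0 ht1.le e
    have hll : (loc n (ix i)).2 = (loc n (ix j)).2 := by
      have h1 : ((loc n (ix i)).2 : ℝ) < (loc n (ix j)).2 + 1 := by linarith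
      have h2 : ((loc n (ix j)).2 : ℝ) < (loc n (ix i)).2 + 1 := by linarith
      have h1 : (loc n (ix i)).2 < (loc n (ix j)).2 + 1 := by exact_mod_cast h1
      have h2 : (loc n (ix j)).2 < (loc n (ix i)).2 + 1 := by exact_mod_cast h2
      omega
    refine ⟨by rw [hll] at h; linarith, ?_⟩
    have hij : ix i = ix j := by omega
    have h1 := ixc i
    rw [hij, ixc j] at h1
    exact Int.ModEq.dvd h1
  have octi : ∀ i, IsOcti (p (i + 1) - p i) := fun i => by
    rw [pS]; exact (hch _ (lt_k _ (ixlt i))).octi _ (loc_spec hn (ix i)).1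
  have ratio : ∀ i, ∃ (r : ℝ) (c : ℕ), 0 < r ∧ c < 8 ∧
      p (i - 1) - p i = r * exp ((Real.pi / 4 * c : ℝ) * I) * (p (i + 1) - p i) := fun i => by
    refine IsOcti.ratio ?_ (octi i)
    have := (octi (i - 1)).neg
    rwa [sub_add_cancel, neg_sub] at this
  choose r c hr hc hrc using ratio
  have c0 : ∀ i, 0 < c i := by
    intro i
    by_contra h
    have h0 : c i = 0 := by omega
    have h1 := hrc i
    have hri := hr i
    have hne : (1 + (r i : ℂ)) ≠ 0 := by exact_mod_cast (by positivity : (1 + r i : ℝ) ≠ 0)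
    rw [h0, Nat.cast_zero, mul_zero, ofReal_zero, zero_mul, Complex.exp_zero, mul_one] at h1
    -- with angle zero the two edges at the corner overlap, at the same parameter on both
    have h2 := (inj (i - 1) i (r i / (1 + r i)) (r i / (1 + r i)) (by positivity)
      (by rw [div_lt_one (by positivity)]; linarith) (by positivity)
      (by rw [div_lt_one (by positivity)]; linarith) (by
        rw [sub_add_cancel, show p (i - 1) = p i + r i * (p (i + 1) - p i) by rw [← h1]; ring]
        push_cast; field_simp; ring)).2
    rw [sub_sub_cancel_left] at h2
    have := Int.le_of_dvd one_pos ((dvd_neg).1 h2)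
    omega
  have emod : ∀ i : ℤ, (m : ℤ) ∣ i - i % m := fun i => Int.dvd_self_sub_emod
  have peq : ∀ i j : ℤ, (m : ℤ) ∣ i - j → p i = p j := fun i j h => by
    have : j % m = i % m := (Int.modEq_iff_dvd.2 h)
    simp only [hp, hix, this]
  refine ⟨p, fun i => Real.pi / 4 * c (i % m), fun i => c (i % m),
    ⟨hm3, per, inj, fun i => by simp, fun i => ?_, fun i => ?_, fun i => ?_⟩, fun i => rfl, ?_, ?_⟩
  · have : (0 : ℝ) < c (i % m) := by exact_mod_cast c0 _
    positivity
  · have : (c (i % m) : ℝ) < 8 := by exact_mod_cast hc _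
    nlinarith [Real.pi_pos]
  · refine ⟨r (i % m), hr _, ?_⟩
    have h := hrc (i % m)
    rw [← peq i (i % m) (emod i), ← peq (i + 1) (i % m + 1) (by simpa using emod i),
      ← peq (i - 1) (i % m - 1) (by simpa using emod i)] at h
    exact h
  · ext z
    simp only [SimplePolygon.carrier, Set.mem_iUnion, Finset.mem_range, exists_prop]
    constructor
    · rintro ⟨i, hi⟩
      obtain ⟨s, h0, h1, rfl⟩ := SimplePolygon.mem_seg hi
      refine ⟨_, lt_k _ (ixlt i), ((hch _ (lt_k _ (ixlt i))).mem _).2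
        ⟨_, s, (loc_spec hn (ix i)).1, h0, h1, ?_⟩⟩
      rw [pS]
    · rintro ⟨q, hq, hz⟩
      obtain ⟨l, t, hl, h0, h1, rfl⟩ := ((hch q hq).mem _).1 hz
      have hlt : ∑ i ∈ Finset.range q, n i + l < m := by
        have := sum_mono n (Nat.succ_le_of_lt hq)
        rw [Finset.sum_range_succ] at this
        omega
      refine ⟨((∑ i ∈ Finset.range q, n i + l : ℕ) : ℤ), ?_⟩
      rw [pS]
      simp only [hp, hpN]
      rw [ixn _ hlt, loc_eq hn hl]
      exact SimplePolygon.seg_mem h0 h1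
  · intro q hq
    have hlt : ∑ i ∈ Finset.range q, n i < m := by
      have := sum_mono n (Nat.succ_le_of_lt hq)
      rw [Finset.sum_range_succ] at this
      have := hn q
      omega
    have e : loc n (∑ i ∈ Finset.range q, n i) = (q, 0) := loc_eq hn (hn q)
    constructor
    · simp only [hp, hpN]
      rw [ixn _ hlt, e]
    · rw [pS, ixn _ hlt, e]

/-! ### Cycles in planar drawings by octilinear chains -/

theorem edges_eq_map_range {V : Type*} {G : SimpleGraph V} {u v : V} (C : G.Walk u v) :
    C.edges = (List.range C.length).map fun q => s(C.getVert q, C.getVert (q + 1)) := by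
  induction C with
  | nil => simp
  | cons h w ih =>
    rw [SimpleGraph.Walk.edges_cons, ih, SimpleGraph.Walk.length_cons, List.range_succ_eq_map]
    simp [Function.comp_def]

/-- A planar drawing of `G` in the complex plane with vertices at the points `c v`, where the edge
`e` is drawn as the octilinear chain `K e` with `n e` segments. -/
structure ChainDrawing {V : Type*} (G : SimpleGraph V) (c : V → ℂ) (n : Sym2 V → ℕ)
    (K : Sym2 V → Set ℂ) : Prop where
  inj : Function.Injective c
  pos : ∀ e, 1 ≤ n e
  chain : ∀ u v, G.Adj u v → ∃ Q : ℕ → ℂ, Chain (n s(u, v)) Q (K s(u, v)) ∧ Q 0 = c u ∧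
    Q (n s(u, v)) = c v
  cross : ∀ e ∈ G.edgeSet, ∀ e' ∈ G.edgeSet, e ≠ e' → ∀ z ∈ K e, z ∈ K e' →
    ∃ w, w ∈ e ∧ w ∈ e' ∧ z = c w

theorem Chain.eq_start {n : ℕ} {Q : ℕ → ℂ} {K : Set ℂ} (h : Chain n Q K) {l : ℕ} {t : ℝ}
    (hl : l < n) (h0 : 0 ≤ t) (h1 : t ≤ 1) (e : Q l + t * (Q (l + 1) - Q l) = Q 0) :
    (l : ℝ) + t = 0 := by
  have := h.inj l 0 t 0 hl h.pos h0 h1 le_rfl zero_le_one (by simpa using e)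
  simpa using this

theorem Chain.eq_end {n : ℕ} {Q : ℕ → ℂ} {K : Set ℂ} (h : Chain n Q K) {l : ℕ} {t : ℝ}
    (hl : l < n) (h0 : 0 ≤ t) (h1 : t ≤ 1) (e : Q l + t * (Q (l + 1) - Q l) = Q n) :
    (l : ℝ) + t = n := by
  have hn := h.pos
  have := h.inj l (n - 1) t 1 hl (by omega) h0 h1 zero_le_one le_rfl (by
    rw [Nat.sub_add_cancel hn, e]; push_cast; ring)
  rw [this, Nat.cast_sub hn]; simp

namespace ChainDrawing
variable {V : Type*} {G : SimpleGraph V} {c : V → ℂ} {n : Sym2 V → ℕ} {K : Sym2 V → Set ℂ}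

open SimplePolygon

/-- The part of an edge `ab` beyond its endpoint `a` stays off the curve `⋃ e ∈ E, K e` and on the
side of `b`, provided `b` is off the curve. -/
theorem stays_inside (D : ChainDrawing G c n K) {E : Set (Sym2 V)} (hE : E ⊆ G.edgeSet) {a b : V}
    (hab : G.Adj a b) (hb : c b ∉ ⋃ e ∈ E, K e) (hbo : c b ∉ outer (⋃ e ∈ E, K e))
    {R : ℕ → ℂ} (hR : Chain (n s(a, b)) R (K s(a, b))) (h0 : R 0 = c a)
    (h1 : R (n s(a, b)) = c b) {t : ℝ} (ht0 : 0 < t) (ht1 : t ≤ 1) :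
    R 0 + t * (R 1 - R 0) ∉ ⋃ e ∈ E, K e ∧ R 0 + t * (R 1 - R 0) ∉ outer (⋃ e ∈ E, K e) := by
  set X := ⋃ e ∈ E, K e with hX
  set N := n s(a, b)
  have hN : 1 ≤ N := hR.pos
  have notE : s(a, b) ∉ E := by
    intro h
    refine hb (Set.mem_biUnion h ((hR.mem _).2 ⟨N - 1, 1, by omega, zero_le_one, le_rfl, ?_⟩))
    rw [Nat.sub_add_cancel hN, h1]; push_cast; ring
  have off : ∀ (l : ℕ) (s : ℝ), l < N → 0 ≤ s → s ≤ 1 → 0 < (l : ℝ) + s →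
      R l + s * (R (l + 1) - R l) ∉ X := by
    intro l s hl hs0 hs1 hpos hz
    obtain ⟨e', he', hz'⟩ := Set.mem_iUnion₂.1 hz
    obtain ⟨x, hx, hx', e⟩ := D.cross s(a, b) hab e' (hE he') (fun h => notE (h ▸ he')) _
      ((hR.mem _).2 ⟨l, s, hl, hs0, hs1, rfl⟩) hz'
    rcases Sym2.mem_iff.1 hx with rfl | rfl
    · rw [← h0] at e
      have := hR.eq_start hl hs0 hs1 e
      linarith
    · rw [e] at hz
      exact hb hz
  have seg_off : ∀ (l : ℕ) (s : ℝ), l < N → 0 ≤ s → s ≤ 1 → 0 < (l : ℝ) + s →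
      segment ℝ (R l + s * (R (l + 1) - R l)) (R (l + 1)) ⊆ Xᶜ := by
    intro l s hl hs0 hs1 hpos z hz
    obtain ⟨u, hu0, hu1, rfl⟩ := mem_seg hz
    have e : R l + s * (R (l + 1) - R l) + u * (R (l + 1) - (R l + s * (R (l + 1) - R l))) =
        R l + ((s + u * (1 - s) : ℝ) : ℂ) * (R (l + 1) - R l) := by push_cast; ring
    rw [e]
    have : 0 ≤ u * (1 - s) := mul_nonneg hu0 (by linarith)
    refine off l _ hl (by linarith) ?_ (by linarith)
    nlinarith
  have nodes : ∀ d, d < N → R (N - d) ∉ outer X := by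
    intro d
    induction d with
    | zero => intro _; simpa [h1] using hbo
    | succ d ih =>
      intro hd ho
      refine ih (by omega) (outer_of_preconnected (convex_segment _ _).isPreconnected
        (seg_off (N - (d + 1)) 0 (by omega) le_rfl zero_le_one ?_) ?_ ?_ ho)
      · rw [add_zero]; exact_mod_cast (by omega : 0 < N - (d + 1))
      · simpa using left_mem_segment ℝ _ _
      · rw [show N - d = N - (d + 1) + 1 by omega]; exact right_mem_segment ℝ _ _
  refine ⟨by simpa using off 0 t hN ht0.le ht1 (by simpa using ht0), fun ho => ?_⟩
  refine nodes (N - 1) (by omega) ?_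
  rw [show N - (N - 1) = 1 by omega]
  exact outer_of_preconnected (convex_segment _ _).isPreconnected
    (by simpa using seg_off 0 t hN ht0.le ht1 (by simpa using ht0)) (left_mem_segment ℝ _ _)
    (right_mem_segment ℝ _ _) ho

/-- At most `3 m - 8` edges lead from a cycle to vertices off its curve and in bounded components,
where `m` is the number of segments of the cycle. -/
theorem interior_edges_le (D : ChainDrawing G c n K) {v : V} (C : G.Walk v v) (hC : C.IsCycle)
    (hk : 3 ≤ C.length) {S : Set (Sym2 V)} (hS : ∀ e ∈ S, e ∈ G.edgeSet ∧ ∃ a b, e = s(a, b) ∧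
      a ∈ C.support ∧ c b ∉ ⋃ e ∈ {e | e ∈ C.edges}, K e ∧
      c b ∉ outer (⋃ e ∈ {e | e ∈ C.edges}, K e)) :
    S.ncard + 8 ≤ 3 * (C.edges.map n).sum := by
  set k := C.length with hkd
  set w : ℕ → V := C.getVert with hw
  set ed : ℕ → Sym2 V := fun q => s(w q, w (q + 1)) with hed
  have hedges : C.edges = (List.range k).map ed := edges_eq_map_range C
  have mem_edges : ∀ e, e ∈ C.edges ↔ ∃ q < k, ed q = e := fun e => by
    rw [hedges]; simp
  have hadj : ∀ q < k, G.Adj (w q) (w (q + 1)) := fun q hq => C.adj_getVert_succ hq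
  have winj : ∀ q < k, ∀ q' < k, w q = w q' → q = q' := fun q hq q' hq' h =>
    hC.getVert_injOn' (by simp only [Set.mem_ofPred_eq]; omega)
      (by simp only [Set.mem_ofPred_eq]; omega) h
  have edinj : ∀ q < k, ∀ q' < k, ed q = ed q' → q = q' := by
    intro q hq q' hq' h
    have := hC.edges_nodup
    rw [hedges] at this
    exact List.inj_on_of_nodup_map this (List.mem_range.2 hq) (List.mem_range.2 hq') h
  have hQ : ∀ q, ∃ Q : ℕ → ℂ, Q 0 = c (w q) ∧ (q < k → Chain (n (ed q)) Q (K (ed q)) ∧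
      Q (n (ed q)) = c (w (q + 1))) := by
    intro q
    by_cases hq : q < k
    · obtain ⟨Q, h1, h2, h3⟩ := D.chain _ _ (hadj q hq)
      exact ⟨Q, h2, fun _ => ⟨h1, h3⟩⟩
    · exact ⟨fun _ => c (w q), rfl, fun h => absurd h hq⟩
  choose Q hQ0 hQ1 using hQ
  obtain ⟨p, α, a, H, ha, hcar, hpt⟩ := exists_polygon (n := fun q => n (ed q)) (Q := Q)
    (K := fun q => K (ed q)) hk (fun q => D.pos _) (fun q hq => (hQ1 q hq).1)
    (fun q hq => by rw [(hQ1 q hq).2, hQ0]) (by simp [hQ0, hw, hkd]) (by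
      intro q hq q' hq' l l' t t' hl hl' h0 h1 h0' h1' e
      by_contra hne
      obtain ⟨x, hx, hx', ez⟩ := D.cross (ed q) (hadj q hq) (ed q') (hadj q' hq')
        (fun h => hne (edinj q hq q' hq' h)) _
        (((hQ1 q hq).1.mem _).2 ⟨l, t, hl, h0, h1.le, rfl⟩)
        (((hQ1 q' hq').1.mem _).2 ⟨l', t', hl', h0', h1'.le, e⟩)
      have key : ∀ q < k, ∀ (l : ℕ) (t : ℝ), l < n (ed q) → 0 ≤ t → t < 1 → x ∈ ed q →
          Q q l + t * (Q q (l + 1) - Q q l) = c x → x = w q := by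
        intro q hq l t hl h0 h1 hx e
        rcases Sym2.mem_iff.1 hx with h | h
        · exact h
        · rw [h, ← (hQ1 q hq).2] at e
          have := (hQ1 q hq).1.eq_end hl h0 h1.le e
          have hl' : (l : ℝ) + 1 ≤ n (ed q) := by exact_mod_cast hl
          linarith
      exact hne (winj q hq q' hq' ((key q hq l t hl h0 h1 hx ez).symm.trans
        (key q' hq' l' t' hl' h0' h1' hx' (e.symm.trans ez)))))
  have hX : carrier p = ⋃ e ∈ {e | e ∈ C.edges}, K e := by
    rw [hcar]; ext z
    simp only [Set.mem_iUnion, Finset.mem_range, exists_prop, Set.mem_ofPred_eq, mem_edges]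
    constructor
    · rintro ⟨q, hq, hz⟩; exact ⟨_, ⟨q, hq, rfl⟩, hz⟩
    · rintro ⟨_, ⟨q, hq, rfl⟩, hz⟩; exact ⟨q, hq, hz⟩
  have hm : (C.edges.map n).sum = ∑ q ∈ Finset.range k, n (ed q) := by
    rw [hedges, List.map_map, ← List.sum_toFinset _ (List.nodup_range), List.toFinset_range]
    rfl
  have hdata : ∀ e, ∃ j d : ℕ, e ∈ S → j < ∑ q ∈ Finset.range k, n (ed q) ∧ d < 8 ∧
      ∃ (x y : V) (R : ℕ → ℂ) (r : ℝ), e = s(x, y) ∧ Chain (n e) R (K e) ∧ R 0 = c x ∧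
        R (n e) = c y ∧ p j = c x ∧ 0 < r ∧
        R 1 - R 0 = r * exp ((Real.pi / 4 * d : ℝ) * I) * (p (j + 1) - p j) ∧
        ∀ t : ℝ, 0 < t → t ≤ 1 → R 0 + t * (R 1 - R 0) ∉ carrier p ∧
          R 0 + t * (R 1 - R 0) ∉ outer (carrier p) := by
    intro e
    by_cases he : e ∈ S
    · obtain ⟨heG, x, y, rfl, hx, hy, hyo⟩ := hS e he
      obtain ⟨q, hq, rfl⟩ : ∃ q < k, w q = x := by
        obtain ⟨i, hi, hik⟩ := SimpleGraph.Walk.mem_support_iff_exists_getVert.1 hx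
        rcases hik.lt_or_eq with h | h
        · exact ⟨i, h, hi⟩
        · refine ⟨0, by omega, ?_⟩
          rw [← hi, h]; simp [hw]
      obtain ⟨R, hR, hR0, hR1⟩ := D.chain _ _ heG
      obtain ⟨hp0, hp1⟩ := hpt q hq
      have hoct := (hQ1 q hq).1.octi 0 (D.pos _)
      rw [zero_add, ← hp0, ← hp1] at hoct
      obtain ⟨r, d, hr, hd, hrd⟩ := (hR.octi 0 hR.pos).ratio hoct
      refine ⟨_, d, fun _ => ⟨?_, hd, w q, y, R, r, rfl, hR, hR0, hR1, ?_, hr, hrd, ?_⟩⟩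
      · have := sum_mono (fun q => n (ed q)) (Nat.succ_le_of_lt hq)
        rw [Finset.sum_range_succ] at this
        have := D.pos (ed q)
        omega
      · rw [hp0, hQ0]
      · intro t h0 h1
        rw [hX]
        refine D.stays_inside (fun e he => ?_) heG hy hyo hR hR0 hR1 h0 h1
        obtain ⟨q, hq, rfl⟩ := (mem_edges e).1 he
        exact hadj q hq
    · exact ⟨0, 0, fun h => absurd h he⟩
  choose j d hjd using hdata
  rw [hm]
  refine H.count_bound ha j d (fun e he => (hjd e he).1) (fun e he => (hjd e he).2.1) ?_ ?_
  · intro e he e' he' hj hd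
    by_contra hne
    obtain ⟨-, -, x, y, R, r, rfl, hR, hR0, hR1, hpx, hr, hrd, -⟩ := hjd e he
    obtain ⟨-, -, x', y', R', r', rfl, hR', hR0', hR1', hpx', hr', hrd', -⟩ := hjd e' he'
    rw [← hj, ← hd] at hrd'
    rw [← hj, hpx] at hpx'
    obtain rfl := D.inj hpx'
    rw [mul_assoc] at hrd hrd'
    obtain ⟨Z, hZ⟩ : ∃ Z, Z = exp ((Real.pi / 4 * d s(x, y) : ℝ) * I) *
      (p (j s(x, y) + 1) - p (j s(x, y))) := ⟨_, rfl⟩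
    rw [← hZ] at hrd hrd'
    -- two edges leaving in the same direction share a point other than their common endpoint
    set ρ := min r r' / 2 with hρ
    have hρ0 : 0 < ρ := by positivity
    have hρ1 : ρ < r := by have := min_le_left r r'; linarith
    have hρ2 : ρ < r' := by have := min_le_right r r'; linarith
    have hrc : (r : ℂ) ≠ 0 := by exact_mod_cast hr.ne'
    have hrc' : (r' : ℂ) ≠ 0 := by exact_mod_cast hr'.ne'
    have e1 : R 0 + ((ρ / r : ℝ) : ℂ) * (R (0 + 1) - R 0) = c x + ρ * Z := by
      rw [zero_add, hrd, hR0]; push_cast; field_simp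
    have e2 : R' 0 + ((ρ / r' : ℝ) : ℂ) * (R' (0 + 1) - R' 0) = c x + ρ * Z := by
      rw [zero_add, hrd', hR0']; push_cast; field_simp
    have t0 : 0 < ρ / r := by positivity
    have t1 : ρ / r < 1 := (div_lt_one hr).2 hρ1
    obtain ⟨u, hu, -, ez⟩ := D.cross _ (hS _ he).1 _ (hS _ he').1 hne (c x + ρ * Z)
      ((hR.mem _).2 ⟨0, _, hR.pos, t0.le, t1.le, e1.symm⟩)
      ((hR'.mem _).2 ⟨0, ρ / r', hR'.pos, by positivity, ((div_lt_one hr').2 hρ2).le, e2.symm⟩)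
    rw [ez] at e1
    rcases Sym2.mem_iff.1 hu with rfl | rfl
    · have := hR.eq_start hR.pos t0.le t1.le (e1.trans hR0.symm)
      push_cast at this; linarith
    · have h := hR.eq_end hR.pos t0.le t1.le (e1.trans hR1.symm)
      have : (1 : ℝ) ≤ n s(x, u) := by exact_mod_cast hR.pos
      push_cast at h; linarith
  · intro e he
    obtain ⟨-, -, x, y, R, r, -, hR, hR0, hR1, hpx, hr, hrd, hin⟩ := hjd e he
    refine ⟨r, hr, fun ρ h0 h1 => ?_⟩
    have hrc : (r : ℂ) ≠ 0 := by exact_mod_cast hr.ne'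
    have e1 : p (j e) + ρ * exp ((Real.pi / 4 * d e : ℝ) * I) * (p (j e + 1) - p (j e)) =
        R 0 + ((ρ / r : ℝ) : ℂ) * (R 1 - R 0) := by
      rw [hrd, hR0, hpx]; push_cast; field_simp
    rw [e1]
    exact hin _ (by positivity) ((div_le_one hr).2 h1.le)

end ChainDrawing

/-! ### From octilinear drawings to chains in the complex plane -/

/-- The identification of the real plane with the complex plane. -/
noncomputable def toC : (ℝ × ℝ) ≃L[ℝ] ℂ := Complex.equivRealProdCLM.symm

/-- The two branches of `Polyline.param` at a node agree, so `t = 1` is allowed. -/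
theorem param_add (P : Polyline) (l : ℕ) {t : ℝ} (h0 : 0 ≤ t) (h1 : t ≤ 1) :
    P.param (l + t) = P.pt l + t • (P.pt (l + 1) - P.pt l) := by
  rcases h1.lt_or_eq with h1 | rfl
  · have : ⌊(l : ℝ) + t⌋ = l := by
      rw [Int.floor_eq_iff]; push_cast; constructor <;> linarith
    simp [Polyline.param, this]
  · have : ⌊(l : ℝ) + 1⌋ = ((l + 1 : ℕ) : ℤ) := by
      rw [Int.floor_eq_iff]; push_cast; constructor <;> linarith
    simp only [Polyline.param, this, Int.toNat_natCast]
    push_cast; simp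

theorem exists_param {n : ℕ} (hn : 1 ≤ n) {s : ℝ} (h0 : 0 ≤ s) (h1 : s ≤ n) :
    ∃ (l : ℕ) (t : ℝ), l < n ∧ 0 ≤ t ∧ t ≤ 1 ∧ s = l + t := by
  rcases h1.lt_or_eq with h1 | rfl
  · refine ⟨⌊s⌋₊, s - ⌊s⌋₊, (Nat.floor_lt h0).2 h1, ?_, ?_, by ring⟩
    · linarith [Nat.floor_le h0]
    · linarith [Nat.lt_floor_add_one s]
  · refine ⟨n - 1, 1, by omega, zero_le_one, le_rfl, ?_⟩
    rw [Nat.cast_sub hn]; simp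

theorem toC_seg (a b : ℝ × ℝ) (t : ℝ) :
    toC (a + t • (b - a)) = toC a + t * (toC b - toC a) := by
  rw [map_add, map_smul, map_sub, Complex.real_smul]

theorem chain_of_polyline (P : Polyline) (hs : P.Simple) (ho : P.Octilinear) :
    Chain P.len (fun l => toC (P.pt l)) (toC '' P.image) := by
  have hn := P.len_pos
  have rng : ∀ (l : ℕ) (t : ℝ), l < P.len → 0 ≤ t → t ≤ 1 →
      (l : ℝ) + t ∈ Set.Icc 0 (P.len : ℝ) := by
    intro l t hl h0 h1
    have : (l : ℝ) + 1 ≤ P.len := by exact_mod_cast hl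
    exact ⟨by positivity, by linarith⟩
  refine ⟨hn, fun l hl => ⟨?_, ?_⟩, fun z => ?_, ?_⟩
  · rw [sub_ne_zero]
    exact fun h => ho.1.1 l hl (toC.injective h).symm
  · have := ho.2 l hl
    simpa [Polyline.OctiSeg, toC] using this
  · constructor
    · rintro ⟨_, ⟨s, hs, rfl⟩, rfl⟩
      obtain ⟨l, t, hl, h0, h1, rfl⟩ := exists_param hn hs.1 hs.2
      exact ⟨l, t, hl, h0, h1, by rw [param_add P l h0 h1, toC_seg]⟩
    · rintro ⟨l, t, hl, h0, h1, rfl⟩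
      exact ⟨_, ⟨l + t, rng l t hl h0 h1, rfl⟩, by rw [param_add P l h0 h1, toC_seg]⟩
  · intro l l' t t' hl hl' h0 h1 h0' h1' e
    simp only [← toC_seg] at e
    refine hs (rng l t hl h0 h1) (rng l' t' hl' h0' h1') ?_
    rw [param_add P l h0 h1, param_add P l' h0' h1']
    exact toC.injective e

theorem chainDrawing_of_octiDrawing {V : Type*} {G : SimpleGraph V} (D : OctiDrawing G)
    (hD : D.IsPlanar) :
    ChainDrawing G (fun w => toC (toR (D.pos w))) (fun e => (D.poly e).len)
      (fun e => toC '' (D.poly e).image) := by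
  obtain ⟨h1, -, h3⟩ := hD
  refine ⟨fun u v h => ?_, fun e => (D.poly e).len_pos, fun u v huv => ?_, ?_⟩
  · have := toC.injective h
    simp only [toR, Prod.mk.injEq, Int.cast_inj] at this
    exact D.inj (Prod.ext this.1 this.2)
  · have hc := chain_of_polyline (D.poly s(u, v)) (h1 _ huv) (D.octi _ huv)
    rcases Set.pair_eq_pair_iff.1 (D.ends u v huv) with ⟨e1, e2⟩ | ⟨e1, e2⟩
    · exact ⟨_, hc, by simp only [e1], by simp only [e2]⟩
    · exact ⟨_, hc.reverse, by simp only [Nat.sub_zero, e2], by simp only [Nat.sub_self, e1]⟩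
  · rintro e he e' he' hne _ ⟨z, hz, rfl⟩ ⟨z', hz', e2⟩
    obtain rfl := toC.injective e2
    obtain ⟨w, ⟨hw, hw'⟩, rfl⟩ := h3 e he e' he' hne ⟨hz, hz'⟩
    exact ⟨w, hw, hw', rfl⟩

theorem not_outer_of_interior {X : Set (ℝ × ℝ)} {z : ℝ × ℝ} (hz : z ∉ X)
    (hb : Bornology.IsBounded (connectedComponentIn Xᶜ z)) :
    toC z ∉ toC '' X ∧ toC z ∉ SimplePolygon.outer (toC '' X) := by
  refine ⟨fun ⟨y, hy, e⟩ => hz (toC.injective e ▸ hy), fun h => h.2 ?_⟩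
  have e := toC.toHomeomorph.image_connectedComponentIn (s := Xᶜ) hz
  rw [Set.image_compl_eq toC.toHomeomorph.bijective] at e
  have e' : toC '' connectedComponentIn Xᶜ z = connectedComponentIn (toC '' X)ᶜ (toC z) := e
  rw [← e']
  exact toC.toContinuousLinearMap.lipschitz.isBounded_image hb

end OctiPoly

/-- Let `Γ = D` be a planar octilinear drawing of a simple graph `G`, let
`C` be a cycle of length `k ≥ 3` in `G`, and let `σ` be the number of edges of `G` having one
endpoint on `C` whose other endpoint is drawn in the interior of `C`. Then the edges of `C`
carry in total at least `max {0, ⌈(σ - 3k + 8)/3⌉}` bends. -/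
theorem cycle_edges_bend_lower_bound {V : Type*} [Fintype V] {G : SimpleGraph V}
    (D : OctiDrawing G) (hD : D.IsPlanar) {v : V} (C : G.Walk v v) (hC : C.IsCycle)
    (k : ℕ) (hk : k = C.length) (hk3 : 3 ≤ k) (σ : ℕ)
    (hσ : σ = {e ∈ G.edgeSet | ∃ a b : V, e = s(a, b) ∧ a ∈ C.support ∧
        toR (D.pos b) ∈ interiorOf D {e' | e' ∈ C.edges}}.ncard) :
    max 0 ⌈((σ : ℚ) - 3 * k + 8) / 3⌉ ≤ ((C.edges.map fun e => (D.poly e).bends).sum : ℤ) := by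
  have himg : OctiPoly.toC '' edgesImage D {e' | e' ∈ C.edges} =
      ⋃ e ∈ {e' | e' ∈ C.edges}, OctiPoly.toC '' (D.poly e).image := by
    simp only [edgesImage, Set.image_iUnion]
  have hmain := (OctiPoly.chainDrawing_of_octiDrawing D hD).interior_edges_le C hC (hk ▸ hk3)
    (S := {e ∈ G.edgeSet | ∃ a b : V, e = s(a, b) ∧ a ∈ C.support ∧
        toR (D.pos b) ∈ interiorOf D {e' | e' ∈ C.edges}}) (by
      rintro e ⟨he, a, b, rfl, ha, hb, hbb⟩
      refine ⟨he, a, b, rfl, ha, ?_⟩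
      rw [← himg]
      exact OctiPoly.not_outer_of_interior hb hbb)
  rw [← hσ] at hmain
  have hlen : ∀ L : List (Sym2 V), (L.map fun e => (D.poly e).len).sum =
      (L.map fun e => (D.poly e).bends).sum + L.length := by
    intro L
    induction L with
    | nil => simp
    | cons e L ih =>
      have : (D.poly e).len = (D.poly e).bends + 1 := (Nat.sub_add_cancel (D.poly e).len_pos).symm
      simp only [List.map_cons, List.sum_cons, List.length_cons, ih, this]
      ring
  rw [hlen, SimpleGraph.Walk.length_edges, ← hk] at hmain
  refine max_le (Int.natCast_nonneg _) (Int.ceil_le.2 ?_)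
  generalize (C.edges.map fun e => (D.poly e).bends).sum = B at hmain ⊢
  have h : (σ : ℚ) + 8 ≤ 3 * (B + k) := by exact_mod_cast hmain
  push_cast
  linarith
end

section
/- Let Γ be a planar octilinear drawing of a simple graph G and let C be a 3-cycle in G such that at least two of the three vertices of C each have at least one neighbor drawn in the interior of C in Γ. Then at least one edge of C has a bend in Γ. -/
/-- The oriented area `(Q - P) × (R - P)`; for fixed `P`, `Q` it is an affine function of `R`
vanishing exactly on the line `PQ` when `P ≠ Q`. -/
def crossAt (P Q R : ℝ × ℝ) : ℝ :=
  (Q.1 - P.1) * (R.2 - P.2) - (Q.2 - P.2) * (R.1 - P.1)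

/-- The inner product `(Q - P)·(R - P)`. -/
def dotAt (P Q R : ℝ × ℝ) : ℝ :=
  (Q.1 - P.1) * (R.1 - P.1) + (Q.2 - P.2) * (R.2 - P.2)

/-! ### Polylines -/

namespace Polyline

lemma param_add (P : Polyline) (i : ℕ) {t : ℝ} (h0 : 0 ≤ t) (h1 : t ≤ 1) :
    P.param (i + t) = P.pt i + t • (P.pt (i + 1) - P.pt i) := by
  rcases h1.lt_or_eq with h | rfl
  · have hf : ⌊(i : ℝ) + t⌋ = (i : ℤ) := by
      rw [Int.floor_eq_iff]
      push_cast
      constructor <;> linarith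
    simp [param, hf]
  · simp [param]

lemma param_natCast (P : Polyline) (i : ℕ) : P.param i = P.pt i := by
  simpa using P.param_add i le_rfl zero_le_one

lemma continuousOn_param (P : Polyline) (n : ℕ) :
    ContinuousOn P.param (Set.Icc 0 (n : ℝ)) := by
  induction n with
  | zero => simp
  | succ n ih =>
    have hsplit : Set.Icc (0 : ℝ) ((n + 1 : ℕ) : ℝ) =
        Set.Icc 0 (n : ℝ) ∪ Set.Icc (n : ℝ) (n + 1) := by
      rw [Set.Icc_union_Icc_eq_Icc (by positivity) (by linarith)]
      push_cast
      rfl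
    rw [hsplit]
    refine ih.union_of_isClosed ?_ isClosed_Icc isClosed_Icc
    have hc : ContinuousOn (fun s : ℝ => P.pt n + (s - n) • (P.pt (n + 1) - P.pt n))
        (Set.Icc (n : ℝ) (n + 1)) := by fun_prop
    refine hc.congr fun s hs => ?_
    have := P.param_add n (t := s - n) (by linarith [hs.1]) (by linarith [hs.2])
    rwa [add_sub_cancel] at this

/-- An octilinear polyline that stays in `T` after leaving its starting point contains
a point seen from the start in an octilinear direction and lying in the component of `T` that
contains the final point. -/
lemma exists_first (P : Polyline) (hP : P.Octilinear) {T : Set (ℝ × ℝ)}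
    (h : ∀ s ∈ Set.Ioc 0 (P.len : ℝ), P.param s ∈ T) :
    ∃ m, OctiSeg (P.pt 0) m ∧ m ∈ connectedComponentIn T (P.pt P.len) := by
  have hl : (1 : ℝ) ≤ P.len := by exact_mod_cast P.len_pos
  have hpre : IsPreconnected (P.param '' Set.Ioc 0 (P.len : ℝ)) :=
    isPreconnected_Ioc.image _ ((P.continuousOn_param _).mono Set.Ioc_subset_Icc_self)
  have hsub := hpre.subset_connectedComponentIn (F := T) (x := P.pt P.len)
    ⟨P.len, ⟨by linarith, le_rfl⟩, P.param_natCast _⟩ (by rintro _ ⟨s, hs, rfl⟩; exact h s hs)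
  refine ⟨P.param (1 / 2), ?_, hsub ⟨1 / 2, ⟨by norm_num, by linarith⟩, rfl⟩⟩
  have hp := P.param_add 0 (t := 1 / 2) (by norm_num) (by norm_num)
  rw [Nat.cast_zero, zero_add] at hp
  rw [hp]
  have ho := hP.2 0 P.len_pos
  simp only [OctiSeg, Prod.fst_add, Prod.snd_add, Prod.smul_fst, Prod.smul_snd, Prod.fst_sub,
    Prod.snd_sub, smul_eq_mul, zero_add] at ho ⊢
  rcases ho with ho | ho | ho | ho
  · left; linarith
  · right; left; linarith
  · right; right; left; linarith
  · right; right; right; linarith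

/-- The counterpart of `exists_first` for the reversed polyline. -/
lemma exists_last (P : Polyline) (hP : P.Octilinear) {T : Set (ℝ × ℝ)}
    (h : ∀ s ∈ Set.Ico 0 (P.len : ℝ), P.param s ∈ T) :
    ∃ m, OctiSeg (P.pt P.len) m ∧ m ∈ connectedComponentIn T (P.pt 0) := by
  have hl : (1 : ℝ) ≤ P.len := by exact_mod_cast P.len_pos
  have hpre : IsPreconnected (P.param '' Set.Ico 0 (P.len : ℝ)) :=
    isPreconnected_Ico.image _ ((P.continuousOn_param _).mono Set.Ico_subset_Icc_self)
  have hsub := hpre.subset_connectedComponentIn (F := T) (x := P.pt 0)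
    ⟨0, ⟨le_rfl, by linarith⟩, by simpa using P.param_natCast 0⟩
    (by rintro _ ⟨s, hs, rfl⟩; exact h s hs)
  obtain ⟨k, hk⟩ : ∃ k, P.len = k + 1 := ⟨P.len - 1, by have := P.len_pos; omega⟩
  have hkR : (P.len : ℝ) = k + 1 := by rw [hk]; push_cast; rfl
  refine ⟨P.param (k + 1 / 2), ?_, hsub ⟨k + 1 / 2, ⟨by positivity, by linarith⟩, rfl⟩⟩
  have hp := P.param_add k (t := 1 / 2) (by norm_num) (by norm_num)
  rw [hp, hk]
  have ho := hP.2 k (by omega)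
  simp only [OctiSeg, Prod.fst_add, Prod.snd_add, Prod.smul_fst, Prod.smul_snd, Prod.fst_sub,
    Prod.snd_sub, smul_eq_mul] at ho ⊢
  rcases ho with ho | ho | ho | ho
  · left; linarith
  · right; left; linarith
  · right; right; left; linarith
  · right; right; right; linarith

lemma image_subset_of_len_eq_one (P : Polyline) (h : P.len = 1) {z : ℝ × ℝ} (hz : z ∈ P.image) :
    ∃ t : ℝ, 0 ≤ t ∧ t ≤ 1 ∧ z = P.pt 0 + t • (P.pt P.len - P.pt 0) := by
  obtain ⟨s, hs, rfl⟩ := hz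
  rw [h, Nat.cast_one] at hs
  refine ⟨s, hs.1, hs.2, ?_⟩
  simpa [h] using P.param_add 0 hs.1 hs.2

end Polyline

/-! ### Plane geometry -/

/-- If an octilinear direction `M - A` lies strictly inside the angle `BAC` with octilinear sides,
then this angle is not acute. -/
lemma angle_obtuse {A B C M : ℝ × ℝ} (hB : Polyline.OctiSeg A B) (hC : Polyline.OctiSeg A C)
    (hM : Polyline.OctiSeg A M) (h1 : 0 < crossAt A B C * crossAt A B M)
    (h2 : 0 < crossAt A C B * crossAt A C M) : dotAt A B C ≤ 0 := by
  simp only [Polyline.OctiSeg, crossAt, dotAt] at *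
  generalize B.1 - A.1 = u1 at *
  generalize B.2 - A.2 = u2 at *
  generalize C.1 - A.1 = w1 at *
  generalize C.2 - A.2 = w2 at *
  generalize M.1 - A.1 = d1 at *
  generalize M.2 - A.2 = d2 at *
  by_contra! h
  -- Here `u·w > 0`, and for all octilinear choices with `u·w ≠ 0` the product of `h1` and `h2` is
  -- a nonpositive multiple of `|d|² (u·w)³`.
  have h12 := mul_pos h1 h2
  have e1 := mul_nonneg (pow_pos h 3).le (sq_nonneg d1)
  have e2 := mul_nonneg (pow_pos h 3).le (sq_nonneg d2)
  rcases hB with rfl | rfl | rfl | rfl <;> rcases hC with rfl | rfl | rfl | rfl <;>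
    rcases hM with rfl | rfl | rfl | rfl <;> ring_nf at * <;> linarith

/-- A point off `S` at which an affine function that is nonnegative on `S` takes
a nonpositive value lies in an unbounded component of the complement of `S`. -/
lemma unbounded_of_side {S : Set (ℝ × ℝ)} {z : ℝ × ℝ} {p q r : ℝ} (hpq : p ≠ 0 ∨ q ≠ 0)
    (hS : ∀ y ∈ S, 0 ≤ p * y.1 + q * y.2 + r) (hz : z ∉ S) (hz0 : p * z.1 + q * z.2 + r ≤ 0) :
    ¬ Bornology.IsBounded (connectedComponentIn Sᶜ z) := by
  intro hb
  have hpos : 0 < p * p + q * q := by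
    rcases hpq with h | h
    · nlinarith [mul_self_pos.2 h, mul_self_nonneg q]
    · nlinarith [mul_self_pos.2 h, mul_self_nonneg p]
  let ray : ℝ → ℝ × ℝ := fun t => (z.1 - t * p, z.2 - t * q)
  have hray : ray '' Set.Ici 0 ⊆ connectedComponentIn Sᶜ z := by
    refine IsPreconnected.subset_connectedComponentIn
      (isPreconnected_Ici.image _ (by fun_prop)) ⟨0, Set.self_mem_Ici, by simp [ray]⟩ ?_
    rintro _ ⟨t, ht, rfl⟩ hy
    rcases (Set.mem_Ici.1 ht).eq_or_lt with rfl | ht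
    · exact hz (by simpa [ray] using hy)
    · have := hS _ hy
      simp only [ray] at this
      nlinarith [mul_pos ht hpos]
  obtain ⟨R, hR⟩ := (hb.subset hray).exists_norm_le
  have key : ∀ t : ℝ, 0 ≤ t → |z.1 - t * p| ≤ R ∧ |z.2 - t * q| ≤ R := fun t ht => by
    have := hR _ ⟨t, ht, rfl⟩
    simpa [ray, Prod.norm_def] using this
  have hR0 : 0 ≤ R := (abs_nonneg _).trans (key 0 le_rfl).1
  -- Moving by `t` lowers the linear form by `t (p² + q²)`, which is at most linear in `R`.
  have bound : ∀ t : ℝ, 0 ≤ t → t * (p * p + q * q) ≤ 2 * R * (|p| + |q|) := fun t ht => by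
    obtain ⟨a1, a2⟩ := key t ht
    obtain ⟨b1, b2⟩ := key 0 le_rfl
    have c1 : |t * p| ≤ 2 * R := by
      rw [abs_le] at *
      constructor <;> linarith
    have c2 : |t * q| ≤ 2 * R := by
      rw [abs_le] at *
      constructor <;> linarith
    have d1 : t * p * p ≤ 2 * R * |p| := by
      calc t * p * p ≤ |t * p * p| := le_abs_self _
        _ = |t * p| * |p| := abs_mul _ _
        _ ≤ _ := by gcongr
    have d2 : t * q * q ≤ 2 * R * |q| := by
      calc t * q * q ≤ |t * q * q| := le_abs_self _
        _ = |t * q| * |q| := abs_mul _ _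
        _ ≤ _ := by gcongr
    linarith
  have h0 : 0 ≤ 2 * R * (|p| + |q|) := by positivity
  have := bound ((2 * R * (|p| + |q|) + 1) / (p * p + q * q)) (by positivity)
  rw [div_mul_cancel₀ _ hpos.ne'] at this
  linarith

/-- If `S` lies on the same side of the line `PQ` as `R` (and on this line when `R` does), a point
of a bounded component of the complement of `S` lies strictly on the side of `R`. In particular,
no such point exists when `P`, `Q`, `R` are collinear. -/
lemma side_pos {S : Set (ℝ × ℝ)} {P Q R z : ℝ × ℝ} (hPQ : P ≠ Q)
    (hS : ∀ y ∈ S, ∃ t : ℝ, 0 ≤ t ∧ crossAt P Q y = t * crossAt P Q R) (hz : z ∉ S)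
    (hb : Bornology.IsBounded (connectedComponentIn Sᶜ z)) :
    0 < crossAt P Q R * crossAt P Q z := by
  by_contra! hle
  obtain ⟨ε, hε, h1, h2⟩ : ∃ ε : ℝ, ε ≠ 0 ∧ 0 ≤ ε * crossAt P Q R ∧ ε * crossAt P Q z ≤ 0 := by
    rcases lt_trichotomy (crossAt P Q R) 0 with h | h | h
    · exact ⟨-1, by norm_num, by linarith, by nlinarith⟩
    · rcases le_total (crossAt P Q z) 0 with h' | h'
      · exact ⟨1, by norm_num, by linarith, by linarith⟩
      · exact ⟨-1, by norm_num, by linarith, by linarith⟩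
    · exact ⟨1, by norm_num, by linarith, by nlinarith⟩
  have haff : ∀ y : ℝ × ℝ, ε * crossAt P Q y = -(ε * (Q.2 - P.2)) * y.1 + ε * (Q.1 - P.1) * y.2
      + ε * ((Q.2 - P.2) * P.1 - (Q.1 - P.1) * P.2) := fun y => by
    simp only [crossAt]
    ring
  refine unbounded_of_side (S := S) ?_ (fun y hy => ?_) hz ((haff z).symm.trans_le h2) hb
  · by_contra! h
    apply hPQ
    have a1 : Q.2 - P.2 = 0 := by simpa [hε] using h.1
    have a2 : Q.1 - P.1 = 0 := by simpa [hε] using h.2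
    ext <;> linarith
  · obtain ⟨t, ht, he⟩ := hS y hy
    rw [← haff, he]
    nlinarith [mul_nonneg ht h1]

/-! ### Drawings -/

section Drawing

variable {V : Type*} {G : SimpleGraph V} (D : OctiDrawing G)

lemma OctiDrawing.ends_cases {u v : V} (h : G.Adj u v) :
    ((D.poly s(u, v)).pt 0 = toR (D.pos u) ∧
      (D.poly s(u, v)).pt (D.poly s(u, v)).len = toR (D.pos v)) ∨
    ((D.poly s(u, v)).pt 0 = toR (D.pos v) ∧
      (D.poly s(u, v)).pt (D.poly s(u, v)).len = toR (D.pos u)) := by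
  simpa [Set.pair_eq_pair_iff] using D.ends u v h

lemma toR_pos_injective : Function.Injective fun w => toR (D.pos w) := by
  intro u v h
  apply D.inj
  simp only [toR, Prod.mk.injEq, Int.cast_inj] at h
  exact Prod.ext h.1 h.2

lemma octiSeg_of_len_eq_one {u v : V} (h : G.Adj u v) (hl : (D.poly s(u, v)).len = 1) :
    Polyline.OctiSeg (toR (D.pos u)) (toR (D.pos v)) := by
  have ho := (D.octi s(u, v) h).2 0 (by omega)
  have he := D.ends_cases h
  rw [hl] at he
  rw [zero_add] at ho
  rcases he with ⟨h0, h1⟩ | ⟨h0, h1⟩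
  · rwa [h0, h1] at ho
  · rw [h0, h1] at ho
    simp only [Polyline.OctiSeg] at ho ⊢
    rcases ho with ho | ho | ho | ho
    · left; linarith
    · right; left; linarith
    · right; right; left; linarith
    · right; right; right; linarith

lemma mem_segment_of_len_eq_one {u v : V} (h : G.Adj u v) (hl : (D.poly s(u, v)).len = 1)
    {z : ℝ × ℝ} (hz : z ∈ (D.poly s(u, v)).image) :
    ∃ t : ℝ, 0 ≤ t ∧ t ≤ 1 ∧
      z = toR (D.pos u) + t • (toR (D.pos v) - toR (D.pos u)) := by
  obtain ⟨t, h0, h1, rfl⟩ := Polyline.image_subset_of_len_eq_one _ hl hz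
  rcases D.ends_cases h with ⟨e0, e1⟩ | ⟨e0, e1⟩
  · exact ⟨t, h0, h1, by rw [e0, e1]⟩
  · refine ⟨1 - t, by linarith, by linarith, ?_⟩
    rw [e0, e1]
    module

/-- In a planar drawing, an edge leaving a vertex `a` for a vertex `x` in the interior of the edge
set `S` contains a point seen from `a` in an octilinear direction and lying in the interior. -/
lemma exists_interior_direction (hD : D.IsPlanar) {S : Set (Sym2 V)} (hS : S ⊆ G.edgeSet)
    {a x : V} (hax : G.Adj a x) (hx : toR (D.pos x) ∈ interiorOf D S) :
    ∃ m, Polyline.OctiSeg (toR (D.pos a)) m ∧ m ∈ interiorOf D S := by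
  obtain ⟨hsimple, hvert, hcross⟩ := hD
  obtain ⟨hxS, hxb⟩ := hx
  have hxim : toR (D.pos x) ∈ (D.poly s(a, x)).image := by
    have : toR (D.pos x) ∈ ({toR (D.pos a), toR (D.pos x)} : Set (ℝ × ℝ)) := by simp
    rw [← hvert a x hax] at this
    exact this.1
  have hmeet : ∀ z ∈ (D.poly s(a, x)).image, z ≠ toR (D.pos a) → z ∈ (edgesImage D S)ᶜ := by
    intro z hz hza hzS
    simp only [edgesImage, Set.mem_iUnion] at hzS hxS
    obtain ⟨e, he, hze⟩ := hzS
    have hne : s(a, x) ≠ e := by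
      rintro rfl
      exact hxS ⟨_, he, hxim⟩
    obtain ⟨w, ⟨hw1, hw2⟩, rfl⟩ := hcross _ hax e (hS he) hne ⟨hz, hze⟩
    rcases Sym2.mem_iff.1 hw1 with rfl | rfl
    · exact hza rfl
    · exact hxS ⟨e, he, hze⟩
  have hinj := hsimple s(a, x) hax
  have hoct := D.octi s(a, x) hax
  set P := D.poly s(a, x) with hP
  obtain ⟨m, hm1, hm2⟩ : ∃ m, Polyline.OctiSeg (toR (D.pos a)) m ∧
      m ∈ connectedComponentIn (edgesImage D S)ᶜ (toR (D.pos x)) := by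
    rcases D.ends_cases hax with ⟨e0, e1⟩ | ⟨e0, e1⟩
    · rw [← e0, ← e1]
      refine P.exists_first hoct fun s hs => hmeet _ ⟨s, ⟨hs.1.le, hs.2⟩, rfl⟩ fun h => ?_
      rw [← e0, ← P.param_natCast 0, Nat.cast_zero] at h
      have := hinj ⟨hs.1.le, hs.2⟩ ⟨le_rfl, by positivity⟩ h
      exact hs.1.ne' this
    · rw [← e0, ← e1]
      refine P.exists_last hoct fun s hs => hmeet _ ⟨s, ⟨hs.1, hs.2.le⟩, rfl⟩ fun h => ?_
      rw [← e1, ← P.param_natCast P.len] at h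
      have := hinj ⟨hs.1, hs.2.le⟩ ⟨by positivity, le_rfl⟩ h
      exact hs.2.ne this
  exact ⟨m, hm1, connectedComponentIn_subset _ _ hm2, by
    rwa [← connectedComponentIn_eq hm2]⟩

/-- In a bendless triangle `abc`, the angle at a vertex `a` with a neighbour in the interior is
not acute. -/
lemma dot_nonpos_of_neighbour (hD : D.IsPlanar) {S : Set (Sym2 V)} {a b c : V}
    (hS : S = {s(a, b), s(b, c), s(a, c)})
    (hab : G.Adj a b) (hbc : G.Adj b c) (hac : G.Adj a c)
    (hl : ∀ e ∈ S, (D.poly e).len = 1)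
    (hx : ∃ x, G.Adj a x ∧ toR (D.pos x) ∈ interiorOf D S) :
    dotAt (toR (D.pos a)) (toR (D.pos b)) (toR (D.pos c)) ≤ 0 := by
  obtain ⟨x, hax, hx⟩ := hx
  have lab : (D.poly s(a, b)).len = 1 := hl _ (by simp [hS])
  have lbc : (D.poly s(b, c)).len = 1 := hl _ (by simp [hS])
  have lac : (D.poly s(a, c)).len = 1 := hl _ (by simp [hS])
  obtain ⟨m, hm, hmS, hmb⟩ := exists_interior_direction D hD (S := S)
    (by rw [hS]; rintro e (rfl | rfl | rfl) <;> assumption) hax hx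
  have hAB : toR (D.pos a) ≠ toR (D.pos b) := fun h => hab.ne (toR_pos_injective D h)
  have hAC : toR (D.pos a) ≠ toR (D.pos c) := fun h => hac.ne (toR_pos_injective D h)
  have hseg : ∀ y ∈ edgesImage D S, ∃ β γ : ℝ, 0 ≤ β ∧ 0 ≤ γ ∧
      y = toR (D.pos a) + β • (toR (D.pos b) - toR (D.pos a)) +
        γ • (toR (D.pos c) - toR (D.pos a)) := by
    intro y hy
    simp only [edgesImage, Set.mem_iUnion] at hy
    obtain ⟨e, he, hy⟩ := hy
    rw [hS] at he
    rcases he with rfl | rfl | rfl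
    · obtain ⟨t, h0, h1, rfl⟩ := mem_segment_of_len_eq_one D hab lab hy
      exact ⟨t, 0, h0, le_rfl, by module⟩
    · obtain ⟨t, h0, h1, rfl⟩ := mem_segment_of_len_eq_one D hbc lbc hy
      exact ⟨1 - t, t, by linarith, h0, by module⟩
    · obtain ⟨t, h0, h1, rfl⟩ := mem_segment_of_len_eq_one D hac lac hy
      exact ⟨0, t, le_rfl, h0, by module⟩
  refine angle_obtuse (octiSeg_of_len_eq_one D hab lab) (octiSeg_of_len_eq_one D hac lac) hm
    (side_pos hAB (fun y hy => ?_) hmS hmb) (side_pos hAC (fun y hy => ?_) hmS hmb)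
  · obtain ⟨β, γ, hβ, hγ, rfl⟩ := hseg y hy
    refine ⟨γ, hγ, ?_⟩
    simp [crossAt]
    ring
  · obtain ⟨β, γ, hβ, hγ, rfl⟩ := hseg y hy
    refine ⟨β, hβ, ?_⟩
    simp [crossAt]
    ring

lemma triangle_core (hD : D.IsPlanar) {S : Set (Sym2 V)} {a b c : V}
    (hS : S = {s(a, b), s(b, c), s(a, c)})
    (hab : G.Adj a b) (hbc : G.Adj b c) (hac : G.Adj a c)
    (hl : ∀ e ∈ S, (D.poly e).len = 1)
    (hna : ∃ x, G.Adj a x ∧ toR (D.pos x) ∈ interiorOf D S)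
    (hnb : ∃ x, G.Adj b x ∧ toR (D.pos x) ∈ interiorOf D S) : False := by
  have h1 := dot_nonpos_of_neighbour D hD hS hab hbc hac hl hna
  have h2 := dot_nonpos_of_neighbour D hD (a := b) (b := a) (c := c)
    (by rw [hS, Sym2.eq_swap (a := b) (b := a), Set.pair_comm]) hab.symm hac hbc hl hnb
  apply hab.ne
  apply toR_pos_injective D
  simp only [dotAt] at h1 h2
  have h := sq_nonneg ((toR (D.pos b)).1 - (toR (D.pos a)).1)
  have h' := sq_nonneg ((toR (D.pos b)).2 - (toR (D.pos a)).2)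
  have e1 : ((toR (D.pos b)).1 - (toR (D.pos a)).1) ^ 2 = 0 := by nlinarith
  have e2 : ((toR (D.pos b)).2 - (toR (D.pos a)).2) ^ 2 = 0 := by nlinarith
  exact Prod.ext (sub_eq_zero.1 (pow_eq_zero_iff two_ne_zero |>.1 e1)).symm
    (sub_eq_zero.1 (pow_eq_zero_iff two_ne_zero |>.1 e2)).symm

end Drawing

/-- Let `D` be a planar octilinear drawing of a simple graph `G` and let
`C` be a `3`-cycle in `G` such that at least two of the three vertices of `C` each have at
least one neighbor drawn in the interior of `C`. Then at least one edge of `C` has a bend. -/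
theorem triangle_edge_has_bend {V : Type*} {G : SimpleGraph V}
    (D : OctiDrawing G) (hD : D.IsPlanar) {v : V} (C : G.Walk v v) (hC : C.IsCycle)
    (h3 : C.length = 3) (a b : V) (ha : a ∈ C.support) (hb : b ∈ C.support) (hab : a ≠ b)
    (hna : ∃ x, G.Adj a x ∧ toR (D.pos x) ∈ interiorOf D {e | e ∈ C.edges})
    (hnb : ∃ x, G.Adj b x ∧ toR (D.pos x) ∈ interiorOf D {e | e ∈ C.edges}) :
    ∃ e ∈ C.edges, 1 ≤ (D.poly e).bends := by
  by_contra! hcon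
  have hl : ∀ e ∈ {e | e ∈ C.edges}, (D.poly e).len = 1 := by
    intro e he
    have h1 := hcon e he
    have h2 := (D.poly e).len_pos
    simp only [Polyline.bends] at h1
    omega
  match C, h3 with
  | .cons (v := u) h₁ (.cons (v := w) h₂ (.cons h₃ .nil)), _ =>
    simp only [SimpleGraph.Walk.support_cons, SimpleGraph.Walk.support_nil, List.mem_cons,
      List.not_mem_nil, or_false] at ha hb
    have key : ∀ c, G.Adj a b → G.Adj b c → G.Adj a c →
        (∀ e, e = s(v, u) ∨ e = s(u, w) ∨ e = s(w, v) ↔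
          e = s(a, b) ∨ e = s(b, c) ∨ e = s(a, c)) → False := by
      intro c i1 i2 i3 he
      refine triangle_core D hD (c := c) ?_ i1 i2 i3 hl hna hnb
      ext e
      simpa using he e
    have h₁' := h₁.symm
    have h₂' := h₂.symm
    have h₃' := h₃.symm
    rcases ha with rfl | rfl | rfl | rfl <;> rcases hb with rfl | rfl | rfl | rfl <;>
      first
      | exact hab rfl
      | exact key u (by assumption) (by assumption) (by assumption) (by grind [Sym2.eq_swap])
      | exact key v (by assumption) (by assumption) (by assumption) (by grind [Sym2.eq_swap])
      | exact key w (by assumption) (by assumption) (by assumption) (by grind [Sym2.eq_swap])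
end
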